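/- arXiv:2203.03393 — 6 statements merged into one kernel-verified Lean document; each statement's English description precedes it below -/
import Mathlib

section
/- Let ρ be a metric on ℝⁿ (n ≥ 1) whose induced topology coincides with the Euclidean topology of ℝⁿ. Then the n-dimensional Hausdorff measure of ℝⁿ computed with respect to ρ is strictly positive: ℋⁿ_ρ(ℝⁿ) > 0. -/
open MeasureTheory

/-- The `d`-dimensional Hausdorff outer measure on `X` computed with respect to an
explicitly given metric `ρ` on `X` (no normalizing constant). -/
noncomputable def hausdorffOuterMeasure {X : Type*} (ρ : MetricSpace X) (d : ℝ) :
    MeasureTheory.OuterMeasure X :=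
  @MeasureTheory.OuterMeasure.mkMetric X (@MetricSpace.toEMetricSpace X ρ) fun r => r ^ d

open Set Metric Function

section Jacobian

variable {E : Type*} [NormedAddCommGroup E] [NormedSpace ℝ E] [FiniteDimensional ℝ E]

theorem ContinuousLinearMap.det_one_add_pos_of_norm_lt_one (A : E →L[ℝ] E) (hA : ‖A‖ < 1) :
    0 < (1 + A).det := by
  have hcont : Continuous fun s : ℝ => (1 + s • A).det :=
    ContinuousLinearMap.continuous_det.comp (by fun_prop)
  have hne : ∀ s ∈ Icc (0 : ℝ) 1, (1 + s • A).det ≠ 0 := by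
    intro s hs
    have hlt : ‖-(s • A)‖ < 1 := by
      rw [norm_neg, norm_smul, Real.norm_of_nonneg hs.1]
      nlinarith [norm_nonneg A, hs.2, hs.1]
    have hu : IsUnit (1 + s • A) := by
      simpa using isUnit_one_sub_of_norm_lt_one hlt
    have := hu.map (ContinuousLinearMap.toLinearMapRingHom : (E →L[ℝ] E) →+* (E →ₗ[ℝ] E))
    exact (LinearMap.isUnit_iff_isUnit_det _).1 this |>.ne_zero
  by_contra! hle
  obtain ⟨s, hs, h0⟩ := intermediate_value_Icc' zero_le_one hcont.continuousOn
    (show (0 : ℝ) ∈ Icc _ _ from ⟨by simpa using hle, by simp [ContinuousLinearMap.det]⟩)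
  exact hne s hs h0

theorem ContinuousLinearMap.exists_polynomial_eval_eq_det_one_add_smul (A : E →L[ℝ] E) :
    ∃ p : Polynomial ℝ, p.natDegree ≤ Module.finrank ℝ E ∧
      ∀ t : ℝ, p.eval t = (1 + t • A).det := by
  let b := Module.finBasis ℝ E
  let M := LinearMap.toMatrix b b (A : E →ₗ[ℝ] E)
  refine ⟨((Polynomial.X : Polynomial ℝ) • M.map Polynomial.C +
    (1 : Matrix _ _ ℝ).map Polynomial.C).det, ?_, fun t => ?_⟩
  · simpa using Polynomial.natDegree_det_X_add_C_le M 1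
  · rw [← Polynomial.coe_evalRingHom, RingHom.map_det, ContinuousLinearMap.det, ← LinearMap.det_toMatrix b]
    have hM : LinearMap.toMatrix b b ((1 + t • A : E →L[ℝ] E) : E →ₗ[ℝ] E) = 1 + t • M := by
      rw [← LinearMap.toMatrix_one b, ← map_smul, ← map_add]
      rfl
    rw [hM]
    congr 1
    ext i j
    by_cases hij : i = j <;> simp [hij] <;> ring

theorem bijective_add_of_lipschitzWith {K : NNReal} {h : E → E} (hK : K < 1)
    (hh : LipschitzWith K h) : Bijective fun x => x + h x := by
  constructor
  · intro x y hxy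
    have h1 : x - y = h y - h x := by
      have : x + h x = y + h y := hxy
      rw [sub_eq_sub_iff_add_eq_add, this, add_comm]
    have h2 := hh.dist_le_mul y x
    rw [dist_eq_norm, ← h1, dist_comm, dist_eq_norm] at h2
    have hK' : (K : ℝ) < 1 := hK
    have : ‖x - y‖ = 0 := by nlinarith [norm_nonneg (x - y)]
    exact sub_eq_zero.1 (norm_eq_zero.1 this)
  · intro y
    have hc : ContractingWith K fun x => y - h x :=
      ⟨hK, LipschitzWith.of_dist_le_mul fun a b => by
        simpa [dist_eq_norm, norm_sub_rev] using hh.dist_le_mul a b⟩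
    have hfix := hc.fixedPoint_isFixedPt
    refine ⟨hc.fixedPoint, ?_⟩
    have : y - h hc.fixedPoint = hc.fixedPoint := hfix
    exact (sub_eq_iff_eq_add.1 this).symm

theorem image_add_eq_of_eqOn_compl_zero {K : NNReal} {h : E → E} {U : Set E} (hK : K < 1)
    (hh : LipschitzWith K h) (h0 : ∀ x ∉ U, h x = 0) : (fun x => x + h x) '' U = U := by
  obtain ⟨hinj, hsurj⟩ := bijective_add_of_lipschitzWith hK hh
  apply Subset.antisymm
  · rintro _ ⟨x, hx, rfl⟩
    by_contra hnot
    have : x + h x = x := hinj (by simp [h0 _ hnot])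
    exact hnot (by simpa [this] using hx)
  · intro y hy
    obtain ⟨x, rfl⟩ := hsurj y
    by_cases hx : x ∈ U
    · exact ⟨x, hx, rfl⟩
    · simp [h0 x hx, hx] at hy

variable [MeasurableSpace E] [BorelSpace E] (μ : Measure E) [μ.IsAddHaarMeasure]

theorem integral_det_one_add_fderiv_eq_measureReal {K : NNReal} {h : E → E} {U : Set E}
    (hK : K < 1) (hh : LipschitzWith K h) (hU : IsOpen U) (h0 : ∀ x ∉ U, h x = 0)
    (hd : DifferentiableOn ℝ h U) :
    ∫ x in U, (1 + fderiv ℝ h x).det ∂μ = μ.real U := by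
  have hderiv : ∀ x ∈ U, HasFDerivWithinAt (fun x => x + h x) (1 + fderiv ℝ h x) U x :=
    fun x hx => ((hasFDerivAt_id x).add
      ((hd x hx).differentiableAt (hU.mem_nhds hx)).hasFDerivAt).hasFDerivWithinAt
  have key := integral_image_eq_integral_abs_det_fderiv_smul μ hU.measurableSet hderiv
    (bijective_add_of_lipschitzWith hK hh).1.injOn fun _ => (1 : ℝ)
  rw [image_add_eq_of_eqOn_compl_zero hK hh h0] at key
  simp only [smul_eq_mul, mul_one, integral_const, MeasurableSet.univ, measureReal_restrict_apply,
    univ_inter] at key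
  rw [key]
  refine integral_congr_ae (ae_of_all _ fun x => (abs_of_pos ?_).symm)
  exact ContinuousLinearMap.det_one_add_pos_of_norm_lt_one _
    ((norm_fderiv_le_of_lipschitz ℝ hh).trans_lt hK)

theorem exists_det_one_add_fderiv_ne_zero {K : NNReal} {h : E → E} {U : Set E}
    (hh : LipschitzWith K h) (hU : IsOpen U) (h0 : ∀ x ∉ U, h x = 0)
    (hd : DifferentiableOn ℝ h U) (hμ : 0 < μ.real U) :
    ∃ x ∈ U, (1 + fderiv ℝ h x).det ≠ 0 := by
  by_contra! hdet
  let s := Finset.range (Module.finrank ℝ E + 1)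
  let v : ℕ → ℝ := fun i => ((K + 1) * (i + 1) : ℝ)⁻¹
  have hK0 : (0 : ℝ) < K + 1 := by positivity
  have hv : InjOn v s := by
    intro i _ j _ hij
    have := inv_injective hij
    simpa [hK0.ne'] using this
  let c : ℕ → ℝ := fun i => (Lagrange.basis s v i).eval 1
  have hc : ∑ i ∈ s, c i = 1 := by
    have := congrArg (Polynomial.eval 1) (Lagrange.sum_basis hv ⟨0, by simp [s]⟩)
    simpa [Polynomial.eval_finsetSum] using this
  have hint : ∀ i, ∫ x in U, (1 + v i • fderiv ℝ h x).det ∂μ = μ.real U := by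
    intro i
    have hpos : 0 < v i := by positivity
    have hlip : LipschitzWith (‖v i‖₊ * K) (fun x => v i • h x) :=
      (lipschitzWith_smul (v i)).comp hh
    have hlt : ‖v i‖₊ * K < 1 := by
      rw [← NNReal.coe_lt_coe]
      simp only [NNReal.coe_mul, coe_nnnorm, NNReal.coe_one, Real.norm_of_nonneg hpos.le, v]
      rw [inv_mul_lt_one₀ (by positivity)]
      nlinarith [K.coe_nonneg, mul_nonneg K.coe_nonneg i.cast_nonneg (α := ℝ),
        (i.cast_nonneg : (0:ℝ) ≤ i)]
    rw [← integral_det_one_add_fderiv_eq_measureReal μ hlt hlip hU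
      (fun x hx => by simp [h0 x hx]) (hd.const_smul (v i))]
    refine setIntegral_congr_fun hU.measurableSet fun x hx => ?_
    have : fderiv ℝ (fun x => v i • h x) x = v i • fderiv ℝ h x :=
      fderiv_fun_const_smul ((hd x hx).differentiableAt (hU.mem_nhds hx)) _
    simp only [this]
  have hintegrable : ∀ i, IntegrableOn (fun x => (1 + v i • fderiv ℝ h x).det) U μ := fun i =>
    Integrable.of_integral_ne_zero (by rw [hint i]; exact hμ.ne')
  have hsum : ∀ x, (1 + fderiv ℝ h x).det = ∑ i ∈ s, c i * (1 + v i • fderiv ℝ h x).det := by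
    intro x
    obtain ⟨p, hp, hpe⟩ :=
      (fderiv ℝ h x).exists_polynomial_eval_eq_det_one_add_smul
    have hpi := Lagrange.eq_interpolate hv (f := p) (Polynomial.degree_le_natDegree.trans_lt
      (by simpa only [s, Finset.card_range] using Nat.cast_lt.2 (Nat.lt_succ_of_le hp)))
    have := congrArg (Polynomial.eval 1) hpi
    rw [hpe, one_smul, Lagrange.interpolate_apply] at this
    simpa [Polynomial.eval_finsetSum, hpe, c, mul_comm] using this
  have : ∫ x in U, (1 + fderiv ℝ h x).det ∂μ = μ.real U := by
    simp_rw [hsum]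
    rw [integral_finsetSum _ fun i _ => (hintegrable i).const_mul (c i)]
    simp_rw [integral_const_mul, hint, ← Finset.sum_mul, hc, one_mul]
  rw [setIntegral_eq_zero_of_forall_eq_zero hdet] at this
  exact hμ.ne this

end Jacobian

section Brouwer

/-- The point `y` moved radially onto the closed ball of radius `r` if it lies outside it. -/
noncomputable def radialClamp {E : Type*} [NormedAddCommGroup E] [NormedSpace ℝ E]
    (r : ℝ) (y : E) : E :=
  (r / max r ‖y‖) • y

theorem radialClamp_of_le_norm {E : Type*} [NormedAddCommGroup E] [NormedSpace ℝ E]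
    {r : ℝ} {y : E} (h : r ≤ ‖y‖) : radialClamp r y = (r / ‖y‖) • y := by
  rw [radialClamp, max_eq_right h]

theorem radialClamp_of_norm_le {E : Type*} [NormedAddCommGroup E] [NormedSpace ℝ E]
    {r : ℝ} (hr : 0 < r) {y : E} (h : ‖y‖ ≤ r) : radialClamp r y = y := by
  rw [radialClamp, max_eq_left h, div_self hr.ne', one_smul]

theorem lipschitzWith_radialClamp {E : Type*} [NormedAddCommGroup E] [NormedSpace ℝ E]
    {r : ℝ} (hr : 0 < r) : LipschitzWith 2 (radialClamp r : E → E) := by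
  refine LipschitzWith.of_dist_le_mul fun x y => ?_
  simp only [radialClamp, dist_eq_norm, NNReal.coe_ofNat]
  set a := max r ‖x‖ with ha
  set b := max r ‖y‖ with hb
  have ha0 : 0 < a := hr.trans_le (le_max_left _ _)
  have hb0 : 0 < b := hr.trans_le (le_max_left _ _)
  have hab : |b - a| ≤ ‖x - y‖ := by
    rw [abs_sub_comm]
    refine (abs_max_sub_max_le_max r ‖x‖ r ‖y‖).trans ?_
    simpa using abs_norm_sub_norm_le x y
  have hra : r / a ≤ 1 := (div_le_one ha0).2 (le_max_left _ _)
  have hyb : ‖y‖ / b ≤ 1 := (div_le_one hb0).2 (le_max_right _ _)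
  have hsplit : (r / a) • x - (r / b) • y = (r / a) • (x - y) + (r / a * ((b - a) / b)) • y := by
    rw [smul_sub, sub_add, ← sub_smul]
    congr 2
    field_simp
    ring
  calc ‖(r / a) • x - (r / b) • y‖
      ≤ r / a * ‖x - y‖ + r / a * (|b - a| * (‖y‖ / b)) := by
        rw [hsplit]
        refine (norm_add_le _ _).trans_eq ?_
        rw [norm_smul, norm_smul, Real.norm_eq_abs, Real.norm_eq_abs, abs_mul, abs_div (b - a),
          abs_of_pos (div_pos hr ha0), abs_of_pos hb0]
        ring
    _ ≤ 1 * ‖x - y‖ + 1 * (‖x - y‖ * 1) := by gcongr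
    _ = 2 * ‖x - y‖ := by ring

variable {E : Type*} [NormedAddCommGroup E] [InnerProductSpace ℝ E] [FiniteDimensional ℝ E]

theorem det_fderiv_eq_zero_of_norm_eventuallyEq_const {g : E → E} {x : E} {S : ℝ} (hS : 0 < S)
    (hg : DifferentiableAt ℝ g x) (hn : ∀ᶠ y in nhds x, ‖g y‖ = S) : (fderiv ℝ g x).det = 0 := by
  by_contra hdet
  have hsurj : Surjective (fderiv ℝ g x) := by
    have hu : IsUnit ((fderiv ℝ g x : E →L[ℝ] E) : E →ₗ[ℝ] E) :=
      (LinearMap.isUnit_iff_isUnit_det _).2 (isUnit_iff_ne_zero.2 hdet)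
    exact ((Module.End.isUnit_iff _).1 hu).2
  obtain ⟨v, hv⟩ := hsurj (g x)
  have h1 := hg.hasFDerivAt.norm_sq
  have h2 : HasFDerivAt (fun y => ‖g y‖ ^ 2) (0 : E →L[ℝ] ℝ) x :=
    (hasFDerivAt_const (S ^ 2) x).congr_of_eventuallyEq (hn.mono fun y hy => by simp [hy])
  have h3 := congrArg (fun L : E →L[ℝ] ℝ => L v) (h1.unique h2)
  simp [hv, hn.self_of_nhds, hS.ne'] at h3

theorem exists_apply_eq_self_of_hasCompactSupport {k : E → E} (hk : Continuous k)
    (hs : HasCompactSupport k) : ∃ x, k x = x := by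
  by_contra! hfix
  borelize E
  have htend : Filter.Tendsto (fun x => ‖x - k x‖) (Filter.cocompact E) Filter.atTop := by
    refine (tendsto_norm_cocompact_atTop (E := E)).congr' ?_
    filter_upwards [hs.compl_mem_cocompact] with x hx
    rw [image_eq_zero_of_notMem_tsupport hx, sub_zero]
  obtain ⟨x₀, hx₀⟩ := (show Continuous fun x => ‖x - k x‖ by fun_prop).exists_forall_le htend
  obtain ⟨δ, hδ, hδx⟩ : ∃ δ > 0, ∀ x, 2 * δ ≤ ‖x - k x‖ :=
    ⟨‖x₀ - k x₀‖ / 2, half_pos (norm_pos_iff.2 (sub_ne_zero.2 (hfix x₀).symm)),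
      fun x => by linarith [hx₀ x]⟩
  obtain ⟨q, hq, hqk, hqs⟩ := hk.exists_contDiff_approx 1 (ε := fun _ => δ) continuous_const
    fun _ => hδ
  have hqc : HasCompactSupport q := hs.mono hqs
  obtain ⟨C, hC⟩ := hq.lipschitzWith_of_hasCompactSupport hqc (by simp)
  obtain ⟨S, hδS, hS⟩ := hqc.isCompact.isBounded.subset_ball_lt δ 0
  have hS0 : 0 < S := hδ.trans hδS
  have hlow : ∀ x, δ ≤ ‖x - q x‖ := by
    intro x
    have h1 := hqk x
    rw [dist_eq_norm] at h1
    have h2 : ‖x - k x‖ ≤ ‖x - q x‖ + ‖q x - k x‖ := by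
      simpa using norm_add_le (x - q x) (q x - k x)
    linarith [hδx x]
  let h : E → E := fun x => (S / δ) • radialClamp δ (x - q x) - radialClamp S x
  have hlip : LipschitzWith (‖S / δ‖₊ * (2 * (1 + C)) + 2) h :=
    ((lipschitzWith_smul (S / δ)).comp
      ((lipschitzWith_radialClamp hδ).comp (LipschitzWith.id.sub hC))).sub
      (lipschitzWith_radialClamp hS0)
  have hzero : ∀ x ∉ ball (0 : E) S, h x = 0 := by
    intro x hx
    have hqx : q x = 0 := image_eq_zero_of_notMem_tsupport fun hx' => hx (hS hx')
    have hSx : S ≤ ‖x‖ := by simpa using hx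
    simp only [h, hqx, sub_zero]
    rw [radialClamp_of_le_norm hSx, radialClamp_of_le_norm (hδS.le.trans hSx), smul_smul,
      div_mul_div_cancel₀ hδ.ne', sub_self]
  have hin : ∀ x ∈ ball (0 : E) S, h x = (S / ‖x - q x‖) • (x - q x) - x := by
    intro x hx
    simp only [h]
    rw [radialClamp_of_norm_le hS0 (mem_ball_zero_iff.1 hx).le, radialClamp_of_le_norm (hlow x),
      smul_smul, div_mul_div_cancel₀ hδ.ne']
  have hne : ∀ x, x - q x ≠ 0 := fun x => norm_pos_iff.1 (hδ.trans_le (hlow x))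
  have hqd : Differentiable ℝ q := hq.differentiable (by simp)
  have hdiff : DifferentiableOn ℝ h (ball 0 S) := by
    refine DifferentiableOn.congr (fun x _ => DifferentiableAt.differentiableWithinAt ?_) hin
    have h1 : DifferentiableAt ℝ (fun x => x - q x) x := differentiableAt_id.sub (hqd x)
    have h2 : DifferentiableAt ℝ (fun x => S / ‖x - q x‖) x := by
      simp only [div_eq_mul_inv]
      exact ((h1.norm ℝ (hne x)).fun_inv (norm_ne_zero_iff.2 (hne x))).const_mul S
    exact (h2.smul h1).sub differentiableAt_id
  obtain ⟨x, hx, hdet⟩ := exists_det_one_add_fderiv_ne_zero (Measure.addHaar : Measure E) hlip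
    isOpen_ball hzero hdiff
    (ENNReal.toReal_pos (measure_ball_pos _ _ hS0).ne' measure_ball_lt_top.ne)
  have hxd : DifferentiableAt ℝ h x := (hdiff x hx).differentiableAt (isOpen_ball.mem_nhds hx)
  have hfd : fderiv ℝ (fun y => y + h y) x = 1 + fderiv ℝ h x :=
    ((hasFDerivAt_id x).add hxd.hasFDerivAt).fderiv
  refine hdet (hfd ▸ det_fderiv_eq_zero_of_norm_eventuallyEq_const hS0
    (differentiableAt_id.add hxd) ?_)
  filter_upwards [isOpen_ball.mem_nhds hx] with y hy
  rw [hin y hy, add_sub_cancel, norm_smul, norm_div, norm_norm,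
    div_mul_cancel₀ _ (norm_ne_zero_iff.2 (hne y)), Real.norm_of_nonneg hS0.le]

theorem exists_apply_eq_self_of_norm_le {φ : E → E} {R : ℝ} (hφ : Continuous φ)
    (hR : ∀ x, ‖φ x‖ ≤ R) : ∃ x, φ x = x := by
  let cutoff : E → ℝ := fun x => max 0 (1 - max 0 (‖x‖ - R))
  have hc : Continuous cutoff := by fun_prop
  have hle : ∀ x, |cutoff x| ≤ 1 := fun x => by
    rw [abs_of_nonneg (le_max_left _ _)]
    simp [cutoff]
  have hsupp : HasCompactSupport fun x => cutoff x • φ x := by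
    refine HasCompactSupport.intro (isCompact_closedBall (0 : E) (R + 1)) fun x hx => ?_
    have hx' : R + 1 < ‖x‖ := by simpa using hx
    have : cutoff x = 0 := max_eq_left (by linarith [le_max_right 0 (‖x‖ - R)])
    simp [this]
  obtain ⟨x, hx⟩ := exists_apply_eq_self_of_hasCompactSupport (hc.smul hφ) hsupp
  have hx' : cutoff x • φ x = x := hx
  have hxR : ‖x‖ ≤ R := by
    rw [← hx', norm_smul, Real.norm_eq_abs]
    exact (mul_le_of_le_one_left (norm_nonneg _) (hle x)).trans (hR x)
  have hone : cutoff x = 1 := by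
    simp [cutoff, max_eq_left (sub_nonpos.2 hxR)]
  exact ⟨x, by simpa [hone] using hx'⟩

end Brouwer

theorem isCompact_setOf_forall_mem_Icc {ι : Type*} (a b : ℝ) :
    IsCompact {x : EuclideanSpace ℝ ι | ∀ i, x i ∈ Icc a b} := by
  convert (isCompact_univ_pi fun _ : ι => isCompact_Icc (a := a) (b := b)).image
    (PiLp.continuous_toLp 2 fun _ : ι => ℝ)
  ext x
  constructor
  · exact fun hx => ⟨fun i => x i, fun i _ => hx i, rfl⟩
  · rintro ⟨y, hy, rfl⟩ i
    exact hy i (mem_univ i)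

/-- The **Poincaré–Miranda theorem** on the cube `[-1, 1]^ι`. -/
theorem exists_eq_zero_of_opposite_signs_on_faces {ι : Type*} [Fintype ι]
    {f : EuclideanSpace ℝ ι → ι → ℝ}
    (hf : Continuous f)
    (hneg : ∀ x : EuclideanSpace ℝ ι, (∀ j, x j ∈ Icc (-1 : ℝ) 1) → ∀ i, x i = -1 → f x i ≤ 0)
    (hpos : ∀ x : EuclideanSpace ℝ ι, (∀ j, x j ∈ Icc (-1 : ℝ) 1) → ∀ i, x i = 1 → 0 ≤ f x i) :
    ∃ x, f x = 0 := by
  let P : EuclideanSpace ℝ ι → EuclideanSpace ℝ ι :=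
    fun x => WithLp.toLp 2 fun i => max (-1) (min 1 (x i))
  have hP : Continuous P := (PiLp.continuous_toLp 2 _).comp (by fun_prop)
  have hPmem : ∀ x j, P x j ∈ Icc (-1 : ℝ) 1 := fun x j =>
    ⟨le_max_left _ _, max_le (by norm_num) (min_le_left _ _)⟩
  let φ : EuclideanSpace ℝ ι → EuclideanSpace ℝ ι := fun x => x - WithLp.toLp 2 (f x)
  have hφ : Continuous φ := continuous_id.sub ((PiLp.continuous_toLp 2 _).comp hf)
  obtain ⟨R, hR⟩ := (isCompact_setOf_forall_mem_Icc (ι := ι) (-1) 1).exists_bound_of_continuousOn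
    hφ.continuousOn
  obtain ⟨x, hx⟩ := exists_apply_eq_self_of_norm_le (hφ.comp hP) fun x => hR (P x) (hPmem x)
  have hxi : ∀ i, P x i - f (P x) i = x i := fun i =>
    congrArg (fun y : EuclideanSpace ℝ ι => y i) hx
  have hPx : ∀ i, P x i = max (-1) (min 1 (x i)) := fun _ => rfl
  refine ⟨P x, funext fun i => ?_⟩
  have hi := hxi i
  rcases lt_or_ge 1 (x i) with h1 | h1
  · have hPi : P x i = 1 := by rw [hPx, min_eq_left h1.le]; norm_num
    linarith [hpos (P x) (hPmem x) i hPi]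
  rcases lt_or_ge (x i) (-1) with h2 | h2
  · have hPi : P x i = -1 := by rw [hPx, min_eq_right h1, max_eq_left h2.le]
    linarith [hneg (P x) (hPmem x) i hPi]
  · have hPi : P x i = x i := by rw [hPx, min_eq_right h1, max_eq_right h2]
    simpa [hPi] using hi

theorem Homeomorph.mkMetric_rpow_univ_pos {ι X : Type*} [Fintype ι] [MetricSpace X]
    (e : EuclideanSpace ℝ ι ≃ₜ X) :
    0 < OuterMeasure.mkMetric (X := X) (fun r => r ^ (Fintype.card ι : ℝ)) univ := by
  borelize X
  rw [← Measure.mkMetric_toOuterMeasure]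
  change 0 < Measure.hausdorffMeasure (Fintype.card ι : ℝ) (univ : Set X)
  let face (s : ℝ) (i : ι) : Set (EuclideanSpace ℝ ι) :=
    {x | ∀ j, x j ∈ Icc (-1 : ℝ) 1} ∩ {x | x i = s}
  have hface : ∀ s i, IsCompact (face s i) := fun s i =>
    (isCompact_setOf_forall_mem_Icc _ _).inter_right
      (isClosed_eq (by fun_prop) continuous_const)
  have hne : ∀ s ∈ Icc (-1 : ℝ) 1, ∀ i, (face s i).Nonempty := fun s hs i =>
    ⟨WithLp.toLp 2 fun _ => s, fun _ => hs, rfl⟩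
  let g : X → ι → ℝ := fun z i => infDist z (e '' face (-1) i)
  have hg : LipschitzWith 1 g := LipschitzWith.of_dist_le_mul fun z w => by
    refine (dist_pi_le_iff (by positivity)).2 fun i => ?_
    exact (lipschitz_infDist_pt (e '' face (-1) i)).dist_le_mul z w
  have hlow : ∀ i, ∃ c > 0, ∀ x ∈ face 1 i, c ≤ g (e x) i := by
    intro i
    have hcont : Continuous fun x => g (e x) i :=
      (continuous_apply i).comp (hg.continuous.comp e.continuous)
    obtain ⟨x, hx, hmin⟩ :=
      (hface 1 i).exists_isMinOn (hne 1 (by norm_num) i) hcont.continuousOn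
    refine ⟨g (e x) i, ?_, fun y hy => hmin hy⟩
    have hclosed := ((hface (-1) i).image e.continuous).isClosed
    refine (hclosed.notMem_iff_infDist_pos ((hne (-1) (by norm_num) i).image e)).1 ?_
    rintro ⟨y, hy, hyx⟩
    have h1 : x i = 1 := hx.2
    have h2 : x i = -1 := e.injective hyx ▸ hy.2
    linarith
  choose c hc0 hc using hlow
  have hsub : (univ.pi fun i => Ioo 0 (c i)) ⊆ g '' univ := by
    intro y hy
    obtain ⟨x, hx⟩ := exists_eq_zero_of_opposite_signs_on_faces (f := fun x => g (e x) - y)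
      ((hg.continuous.comp e.continuous).sub continuous_const)
      (fun x hx i hi => by
        have : g (e x) i = 0 := infDist_zero_of_mem (mem_image_of_mem e ⟨hx, hi⟩)
        simpa [this] using (hy i (mem_univ i)).1.le)
      (fun x hx i hi => sub_nonneg.2 ((hy i (mem_univ i)).2.le.trans (hc i x ⟨hx, hi⟩)))
    exact ⟨e x, mem_univ _, sub_eq_zero.1 hx⟩
  have hbox : 0 < volume (univ.pi fun i => Ioo 0 (c i)) :=
    (isOpen_set_pi finite_univ fun _ _ => isOpen_Ioo).measure_pos volume
      (univ_pi_nonempty_iff.2 fun i => nonempty_Ioo.2 (hc0 i))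
  have hle := hg.hausdorffMeasure_image_le (Nat.cast_nonneg (α := ℝ) (Fintype.card ι)) univ
  rw [hausdorffMeasure_pi_real] at hle
  simpa using (hbox.trans_le (measure_mono hsub)).trans_le hle

/-- If `ρ` is a metric on `ℝⁿ` (`n ≥ 1`) inducing the Euclidean topology, then the
`n`-dimensional Hausdorff measure of `ℝⁿ` with respect to `ρ` is strictly positive. -/
theorem hausdorffMeasure_univ_pos_of_metric_inducing_euclidean
    (n : ℕ) (hn : 1 ≤ n) (ρ : MetricSpace (EuclideanSpace ℝ (Fin n)))
    (hρ : ρ.toUniformSpace.toTopologicalSpace =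
      (inferInstance : TopologicalSpace (EuclideanSpace ℝ (Fin n)))) :
    0 < hausdorffOuterMeasure ρ n (Set.univ : Set (EuclideanSpace ℝ (Fin n))) := by
  let e : @Homeomorph (EuclideanSpace ℝ (Fin n)) (EuclideanSpace ℝ (Fin n)) inferInstance
      ρ.toUniformSpace.toTopologicalSpace :=
    @Homeomorph.mk _ _ _ ρ.toUniformSpace.toTopologicalSpace (Equiv.refl _)
      (continuous_iff_le_induced.2 (by rw [hρ]; exact induced_id.ge))
      (continuous_iff_le_induced.2 (by rw [hρ]; exact induced_id.ge))
  have := @Homeomorph.mkMetric_rpow_univ_pos (Fin n) _ _ ρ e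
  rwa [Fintype.card_fin] at this
end

section
/- Let ρ be a metric on ℝⁿ (n ≥ 1) whose induced topology coincides with the Euclidean topology of ℝⁿ, and let A ⊆ ℝⁿ be a nonempty open set (in the Euclidean topology). Then ℋⁿ_ρ(A) > 0. -/
open MeasureTheory

open Set
open scoped NNReal ENNReal

/-- Lagrange interpolation expresses `det (1 + A)` through the values `det (1 + t • A)` at any
`n + 1` distinct nodes, with weights that do not depend on `A`. -/
theorem ContinuousLinearMap.exists_weights_det_one_add {n : ℕ} (t : Fin (n + 1) → ℝ)
    (ht : Function.Injective t) :
    ∃ w : Fin (n + 1) → ℝ, ∑ j, w j = 1 ∧ ∀ A : (Fin n → ℝ) →L[ℝ] (Fin n → ℝ),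
      (1 + A).det = ∑ j, w j * (1 + t j • A).det := by
  refine ⟨fun j => (Lagrange.basis Finset.univ t j).eval 1, ?_, fun A => ?_⟩
  · rw [← Polynomial.eval_finsetSum, Lagrange.sum_basis ht.injOn Finset.univ_nonempty]
    simp
  · set B := LinearMap.toMatrix' (A : (Fin n → ℝ) →ₗ[ℝ] (Fin n → ℝ)) with hB
    set p : Polynomial ℝ := ((Polynomial.X : Polynomial ℝ) • B.map Polynomial.C +
      (1 : Matrix (Fin n) (Fin n) ℝ).map Polynomial.C).det with hp
    have hdeg : p.degree < (Finset.univ : Finset (Fin (n + 1))).card := by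
      refine lt_of_le_of_lt Polynomial.degree_le_natDegree ?_
      have := Polynomial.natDegree_det_X_add_C_le B 1
      simp only [Fintype.card_fin] at this
      simp only [Finset.card_univ, Fintype.card_fin]
      exact_mod_cast Nat.lt_succ_of_le this
    have heval : ∀ s : ℝ, p.eval s = (1 + s • A).det := by
      intro s
      rw [hp, ← Polynomial.coe_evalRingHom, RingHom.map_det, ContinuousLinearMap.det,
        ← LinearMap.det_toMatrix']
      congr 1
      ext i j
      by_cases hij : i = j <;>
        simp [hB, LinearMap.toMatrix'_apply, hij] <;> ring
    have h := congrArg (Polynomial.eval 1) (Lagrange.eq_interpolate (v := t) ht.injOn hdeg)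
    simp only [heval, one_smul, Lagrange.interpolate_apply, Polynomial.eval_finsetSum,
      Polynomial.eval_mul, Polynomial.eval_C] at h
    rw [h]
    exact Finset.sum_congr rfl fun j _ => mul_comm _ _

/-- A perturbation of the identity by a strictly contracting map is bijective. -/
theorem LipschitzWith.bijective_id_add {E : Type*} [NormedAddCommGroup E] [NormedSpace ℝ E]
    [CompleteSpace E] {c : ℝ≥0} {F : E → E} (hF : LipschitzWith c F) (hc : c < 1) :
    Function.Bijective fun x => x + F x := by
  have happrox : ApproximatesLinearOn (fun x => x + F x)
      ((ContinuousLinearEquiv.refl ℝ E : E ≃L[ℝ] E) : E →L[ℝ] E) univ c := by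
    refine ApproximatesLinearOn.approximatesLinearOn_iff_lipschitzOnWith.2 ?_
    convert! hF.lipschitzOnWith (s := univ) using 1
    ext x
    simp
  have hN : Subsingleton E ∨
      c < ‖((ContinuousLinearEquiv.refl ℝ E).symm : E →L[ℝ] E)‖₊⁻¹ := by
    rcases subsingleton_or_nontrivial E with h | h
    · exact Or.inl h
    · refine Or.inr ?_
      simpa using hc
  exact ⟨injOn_univ.1 (happrox.injOn hN), happrox.surjective hN⟩

/-- A Lipschitz self-map of `ℝⁿ` maps Lebesgue null sets to null sets. -/
theorem LipschitzWith.volume_image_eq_zero {n : ℕ} {c : ℝ≥0}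
    {F : (Fin n → ℝ) → (Fin n → ℝ)} (hF : LipschitzWith c F) {s : Set (Fin n → ℝ)}
    (hs : volume s = 0) : volume (F '' s) = 0 := by
  have h := hF.hausdorffMeasure_image_le (d := (Fintype.card (Fin n) : ℝ)) (by positivity) s
  rw [hausdorffMeasure_pi_real, hs, mul_zero] at h
  exact le_antisymm h bot_le

/-- Let `x ↦ x + G x` be a Lipschitz map with `G` so small that it is injective with positive
Jacobian. If it maps `Q` onto `Q`, the integral of its Jacobian over `Q` is the volume of `Q`. -/
theorem integral_det_one_add_fderiv_of_surjOn {n : ℕ} {c : ℝ≥0}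
    {G : (Fin n → ℝ) → (Fin n → ℝ)} (hG : LipschitzWith c G) {Q : Set (Fin n → ℝ)}
    (hQ : MeasurableSet Q) (hQfin : volume Q ≠ ∞)
    (hinj : Function.Injective fun x => x + G x) (himage : (fun x => x + G x) '' Q = Q)
    (hdet : ∀ x, 0 ≤ (1 + fderiv ℝ G x).det) :
    IntegrableOn (fun x => (1 + fderiv ℝ G x).det) (Q ∩ {x | DifferentiableAt ℝ G x}) ∧
      ∫ x in Q ∩ {x | DifferentiableAt ℝ G x}, (1 + fderiv ℝ G x).det = volume.real Q := by
  set S := Q ∩ {x | DifferentiableAt ℝ G x}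
  set Φ : (Fin n → ℝ) → (Fin n → ℝ) := fun x => x + G x
  have hSmeas : MeasurableSet S := hQ.inter (measurableSet_of_differentiableAt ℝ G)
  have hderiv : ∀ x ∈ S, HasFDerivWithinAt Φ (1 + fderiv ℝ G x) S x := fun x hx =>
    ((hasFDerivAt_id x).add hx.2.hasFDerivAt).hasFDerivWithinAt
  have hdiff : volume (Q \ S) = 0 := by
    refine measure_mono_null (fun x hx => ?_) (ae_iff.1 hG.ae_differentiableAt)
    exact fun h => hx.2 ⟨hx.1, h⟩
  have hΦlip : LipschitzWith (1 + c) Φ := LipschitzWith.id.add hG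
  have hΦS : Φ '' S =ᵐ[volume] Q := by
    have hsub : Φ '' S ⊆ Q := (image_mono inter_subset_left).trans himage.subset
    refine (ae_eq_set.2 ⟨by rw [sdiff_eq_empty.2 hsub, measure_empty], ?_⟩)
    refine measure_mono_null ?_ (hΦlip.volume_image_eq_zero hdiff)
    rw [image_sdiff hinj, himage]
  have hint := integrableOn_image_iff_integrableOn_abs_det_fderiv_smul volume hSmeas hderiv
    hinj.injOn (fun _ => (1 : ℝ))
  have hval := integral_image_eq_integral_abs_det_fderiv_smul volume hSmeas hderiv
    hinj.injOn (fun _ => (1 : ℝ))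
  simp only [abs_of_nonneg (hdet _), smul_eq_mul, mul_one] at hint hval
  refine ⟨hint.1 ?_, ?_⟩
  · exact integrableOn_const (by rwa [measure_congr hΦS])
  · rw [← hval]
    simp [Measure.real, measure_congr hΦS]

/-- If every map `x ↦ x + t • G x` with `t ∈ [0, 1]` preserves both `Q` and its complement, then
the integral over `Q` of the Jacobian of `x ↦ x + G x` is the volume of `Q`: the integral is
polynomial in `t` and is constant for small `t`. -/
theorem integral_det_one_add_fderiv {n : ℕ} {c : ℝ≥0}
    {G : (Fin n → ℝ) → (Fin n → ℝ)} (hG : LipschitzWith c G) {Q : Set (Fin n → ℝ)}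
    (hQ : MeasurableSet Q) (hQfin : volume Q ≠ ∞)
    (hmem : ∀ t ∈ Icc (0 : ℝ) 1, ∀ x, x + t • G x ∈ Q ↔ x ∈ Q) :
    ∫ x in Q ∩ {x | DifferentiableAt ℝ G x}, (1 + fderiv ℝ G x).det = volume.real Q := by
  obtain ⟨ε, hε, hdet⟩ : ∃ ε > 0, ∀ A : (Fin n → ℝ) →L[ℝ] (Fin n → ℝ), ‖A‖ < ε →
      0 < (1 + A).det := by
    have hcont : Continuous fun A : (Fin n → ℝ) →L[ℝ] (Fin n → ℝ) => (1 + A).det :=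
      ContinuousLinearMap.continuous_det.comp (continuous_const.add continuous_id)
    have hpos : (0 : (Fin n → ℝ) →L[ℝ] (Fin n → ℝ)) ∈ {A | 0 < (1 + A).det} := by
      simp [ContinuousLinearMap.det]
    obtain ⟨ε, hε, hsub⟩ := Metric.isOpen_iff.1 (isOpen_lt continuous_const hcont) 0 hpos
    exact ⟨ε, hε, fun A hA => hsub (by simpa using hA)⟩
  obtain ⟨δ, hδ, hδ1, hδc, hδε⟩ : ∃ δ : ℝ, 0 < δ ∧ δ ≤ 1 ∧ δ * c < 1 ∧ δ * c < ε := by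
    refine ⟨min 1 ε / (c + 2), by positivity, ?_, ?_, ?_⟩
    · rw [div_le_one (by positivity)]
      linarith [min_le_left 1 ε, c.coe_nonneg]
    all_goals
      rw [div_mul_eq_mul_div, div_lt_iff₀ (by positivity)]
      nlinarith [min_le_left 1 ε, min_le_right 1 ε, c.coe_nonneg, lt_min one_pos hε]
  have hsmall : ∀ t ∈ Ioc (0 : ℝ) δ,
      IntegrableOn (fun x => (1 + t • fderiv ℝ G x).det) (Q ∩ {x | DifferentiableAt ℝ G x}) ∧
      ∫ x in Q ∩ {x | DifferentiableAt ℝ G x}, (1 + t • fderiv ℝ G x).det = volume.real Q := by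
    rintro t ⟨ht0, htδ⟩
    have htc : t * c ≤ δ * c := mul_le_mul_of_nonneg_right htδ c.coe_nonneg
    have hlip : LipschitzWith (‖t‖₊ * c) (t • G) := (lipschitzWith_smul t).comp hG
    have hcoe : ((‖t‖₊ * c : ℝ≥0) : ℝ) = t * c := by simp [abs_of_pos ht0]
    have hbij : Function.Bijective fun x => x + (t • G) x :=
      hlip.bijective_id_add (by rw [← NNReal.coe_lt_coe, hcoe]; simpa using htc.trans_lt hδc)
    have hmem' := hmem t ⟨ht0.le, htδ.trans hδ1⟩
    have himage : (fun x => x + (t • G) x) '' Q = Q := by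
      conv_lhs => rw [show Q = (fun x => x + (t • G) x) ⁻¹' Q from Set.ext fun x => (hmem' x).symm]
      exact image_preimage_eq Q hbij.2
    have hfderiv : ∀ x, fderiv ℝ (t • G) x = t • fderiv ℝ G x := fun x =>
      congrFun (fderiv_const_smul_field t) x
    have hdiffble : {x | DifferentiableAt ℝ (t • G) x} = {x | DifferentiableAt ℝ G x} := by
      ext x
      refine ⟨fun h => ?_, fun h => h.const_smul t⟩
      have h' := h.const_smul t⁻¹
      rwa [inv_smul_smul₀ ht0.ne'] at h'
    have h := integral_det_one_add_fderiv_of_surjOn hlip hQ hQfin hbij.1 himage fun x => by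
      refine (hdet _ ((norm_fderiv_le_of_lipschitz ℝ hlip).trans_lt ?_)).le
      rw [hcoe]
      exact htc.trans_lt hδε
    simpa only [hdiffble, hfderiv] using h
  obtain ⟨w, hw, hwdet⟩ := ContinuousLinearMap.exists_weights_det_one_add
    (fun j : Fin (n + 1) => δ / ((j : ℝ) + 1)) (fun i j hij => by
      rw [div_eq_div_iff (by positivity) (by positivity)] at hij
      exact Fin.ext (by exact_mod_cast (add_right_cancel (mul_left_cancel₀ hδ.ne' hij)).symm))
  have hnode : ∀ j : Fin (n + 1), δ / ((j : ℝ) + 1) ∈ Ioc (0 : ℝ) δ := fun j =>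
    ⟨by positivity, div_le_self hδ.le (by linarith [(Nat.cast_nonneg j : (0 : ℝ) ≤ (j : ℕ))])⟩
  rw [show (fun x => (1 + fderiv ℝ G x).det) = _ from funext fun x => hwdet (fderiv ℝ G x)]
  rw [integral_finsetSum _ fun j _ => ((hsmall _ (hnode j)).1).const_mul _]
  simp only [integral_const_mul, (hsmall _ (hnode _)).2, ← Finset.sum_mul, hw, one_mul]

/-- The coordinatewise nearest-point retraction of `ℝⁿ` onto the unit cube. -/
def cubeClamp {n : ℕ} (x : Fin n → ℝ) : Fin n → ℝ := fun i => max 0 (min 1 (x i))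

theorem cubeClamp_mem {n : ℕ} (x : Fin n → ℝ) : cubeClamp x ∈ Icc (0 : Fin n → ℝ) 1 :=
  ⟨fun _ => le_max_left _ _, fun _ => max_le zero_le_one (min_le_left _ _)⟩

theorem cubeClamp_of_mem {n : ℕ} {x : Fin n → ℝ} (hx : x ∈ Icc (0 : Fin n → ℝ) 1) :
    cubeClamp x = x := by
  ext i
  simp only [cubeClamp]
  rw [min_eq_right (show x i ≤ 1 from hx.2 i), max_eq_right (show 0 ≤ x i from hx.1 i)]

theorem lipschitzWith_cubeClamp {n : ℕ} :
    LipschitzWith 1 (cubeClamp : (Fin n → ℝ) → (Fin n → ℝ)) := by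
  refine LipschitzWith.of_dist_le_mul fun x y => (dist_pi_le_iff (by positivity)).2 fun i => ?_
  have h : LipschitzWith 1 fun a : ℝ => max 0 (min 1 a) :=
    (LipschitzWith.id.const_min 1).const_max 0
  refine (h.dist_le_mul (x i) (y i)).trans ?_
  gcongr
  exact dist_le_pi_dist x y i

/-- If `Φ` maps the cube into itself near `x` and some coordinate of `Φ x` is `0` or `1`,
the Jacobian of `Φ` at `x` vanishes. -/
theorem det_eq_zero_of_eventually_mem_cube {n : ℕ} {Φ : (Fin n → ℝ) → (Fin n → ℝ)}
    {x : Fin n → ℝ} {A : (Fin n → ℝ) →L[ℝ] (Fin n → ℝ)} (hΦ : HasFDerivAt Φ A x)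
    (hmem : ∀ᶠ y in nhds x, Φ y ∈ Icc (0 : Fin n → ℝ) 1) {i : Fin n}
    (hi : Φ x i = 0 ∨ Φ x i = 1) : A.det = 0 := by
  have hextr : IsLocalExtr (fun y => Φ y i) x := by
    rcases hi with hi | hi
    · exact Or.inl (hmem.mono fun y hy => by simpa [hi] using hy.1 i)
    · exact Or.inr (hmem.mono fun y hy => by simpa [hi] using hy.2 i)
  have hrow : (ContinuousLinearMap.proj i : (Fin n → ℝ) →L[ℝ] ℝ).comp A = 0 :=
    hextr.hasFDerivAt_eq_zero ((hasFDerivAt_pi'.1 hΦ) i)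
  by_contra hdet
  obtain ⟨v, hv⟩ := (LinearMap.equivOfDetNeZero _ hdet).surjective (Pi.single i 1)
  have h1 : A v = Pi.single i 1 := hv
  have h2 : A v i = 0 := DFunLike.congr_fun hrow v
  simp [h1] at h2

/-- The Poincaré–Miranda theorem for Lipschitz maps. -/
theorem LipschitzWith.exists_eq_zero_of_mem_cube {n : ℕ} {c : ℝ≥0}
    {g : (Fin n → ℝ) → (Fin n → ℝ)} (hg : LipschitzWith c g)
    (hg0 : ∀ x ∈ Icc (0 : Fin n → ℝ) 1, ∀ i, x i = 0 → g x i ≤ 0)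
    (hg1 : ∀ x ∈ Icc (0 : Fin n → ℝ) 1, ∀ i, x i = 1 → 0 ≤ g x i) :
    ∃ x ∈ Icc (0 : Fin n → ℝ) 1, g x = 0 := by
  by_contra! hne
  obtain ⟨δ, hδ, hδg⟩ : ∃ δ > 0, ∀ x ∈ Icc (0 : Fin n → ℝ) 1, δ ≤ ‖g x‖ :=
    isCompact_Icc.exists_forall_le' hg.continuous.norm.continuousOn
      fun x hx => norm_pos_iff.2 (hne x hx)
  set Q := Icc (0 : Fin n → ℝ) 1 with hQ
  set G : (Fin n → ℝ) → (Fin n → ℝ) := fun x =>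
    cubeClamp (cubeClamp x + δ⁻¹ • g (cubeClamp x)) - cubeClamp x with hG
  have hGlip : ∃ C, LipschitzWith C G := by
    have h := lipschitzWith_cubeClamp (n := n)
    exact ⟨_, (h.comp (h.add (((lipschitzWith_smul δ⁻¹).comp hg).comp h))).sub h⟩
  obtain ⟨C, hGlip⟩ := hGlip
  have hQmeas : MeasurableSet Q := measurableSet_Icc
  have hvol : volume.real Q = 1 := by
    simp [hQ, Measure.real, Real.volume_Icc_pi]
  have hmem : ∀ t ∈ Icc (0 : ℝ) 1, ∀ x, x + t • G x ∈ Q ↔ x ∈ Q := by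
    intro t ht x
    constructor
    · intro h
      refine ⟨fun i => ?_, fun i => ?_⟩ <;> by_contra! hxi
      · have hci : cubeClamp x i = 0 := by
          simp only [cubeClamp]
          exact max_eq_left ((min_le_right _ _).trans hxi.le)
        have hGi : G x i = 0 := by
          have hle : δ⁻¹ * g (cubeClamp x) i ≤ 0 :=
            mul_nonpos_of_nonneg_of_nonpos (by positivity) (hg0 _ (cubeClamp_mem x) i hci)
          simp only [hG, Pi.sub_apply, hci, sub_zero]
          refine max_eq_left ((min_le_right _ _).trans ?_)
          rwa [Pi.add_apply, hci, zero_add]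
        have := h.1 i
        simp only [Pi.add_apply, Pi.smul_apply, hGi, smul_zero, add_zero] at this
        exact absurd this (not_le.2 hxi)
      · have hci : cubeClamp x i = 1 := by
          simp only [cubeClamp]
          rw [min_eq_left (show (1 : ℝ) ≤ x i from hxi.le), max_eq_right zero_le_one]
        have hGi : G x i = 0 := by
          have hle : 0 ≤ δ⁻¹ * g (cubeClamp x) i :=
            mul_nonneg (by positivity) (hg1 _ (cubeClamp_mem x) i hci)
          simp only [hG, Pi.sub_apply, hci]
          rw [sub_eq_zero, cubeClamp, min_eq_left, max_eq_right zero_le_one]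
          rw [Pi.add_apply, hci]
          exact le_add_of_nonneg_right hle
        have := h.2 i
        simp only [Pi.add_apply, Pi.smul_apply, hGi, smul_zero, add_zero] at this
        exact absurd this (not_le.2 hxi)
    · intro hx
      have h := (convex_Icc (0 : Fin n → ℝ) 1).add_smul_sub_mem hx
        (cubeClamp_mem (x + δ⁻¹ • g x)) ht
      simpa only [hG, cubeClamp_of_mem hx] using h
  have hone := integral_det_one_add_fderiv hGlip hQmeas isCompact_Icc.measure_ne_top hmem
  rw [hvol] at hone
  have hzero : ∫ x in Q ∩ {x | DifferentiableAt ℝ G x}, (1 + fderiv ℝ G x).det = 0 := by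
    refine integral_eq_zero_of_ae ?_
    have hfront : ∀ᵐ x, x ∉ frontier Q :=
      measure_eq_zero_iff_ae_notMem.1 ((convex_Icc _ _).addHaar_frontier volume)
    filter_upwards [ae_restrict_of_ae hfront, ae_restrict_mem
      (hQmeas.inter (measurableSet_of_differentiableAt ℝ G))] with x hxf hx
    have hxint : x ∈ interior Q := by
      by_contra hxi
      exact hxf ⟨subset_closure hx.1, hxi⟩
    obtain ⟨i, hi⟩ : ∃ i, δ ≤ |g x i| := by
      by_contra! hlt
      exact absurd (hδg x hx.1) (not_le.2 ((pi_norm_lt_iff hδ).2 hlt))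
    refine det_eq_zero_of_eventually_mem_cube (i := i)
      ((hasFDerivAt_id x).add hx.2.hasFDerivAt) ?_ ?_
    · filter_upwards [mem_interior_iff_mem_nhds.1 hxint] with y hy
      have h := (hmem 1 (by simp) y).2 hy
      rwa [one_smul] at h
    · have hval : (x + G x) i = max 0 (min 1 (x i + δ⁻¹ * g x i)) := by
        simp [hG, cubeClamp_of_mem hx.1, cubeClamp]
      have hx0 : 0 ≤ x i := hx.1.1 i
      have hx1 : x i ≤ 1 := hx.1.2 i
      change (x + G x) i = 0 ∨ (x + G x) i = 1
      rw [hval]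
      rcases le_abs.1 hi with hi | hi
      · have : 1 ≤ δ⁻¹ * g x i := by rwa [inv_mul_eq_div, one_le_div hδ]
        right
        rw [min_eq_left (by linarith), max_eq_right zero_le_one]
      · have : 1 ≤ δ⁻¹ * -g x i := by rwa [inv_mul_eq_div, one_le_div hδ]
        left
        exact max_eq_left ((min_le_right _ _).trans (by linarith))
  exact one_ne_zero (hone.symm.trans hzero)

/-- The Poincaré–Miranda theorem, with strict sign conditions on the faces. -/
theorem Continuous.exists_eq_zero_of_mem_cube {n : ℕ}
    {g : (Fin n → ℝ) → (Fin n → ℝ)} (hg : Continuous g)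
    (hg0 : ∀ x ∈ Icc (0 : Fin n → ℝ) 1, ∀ i, x i = 0 → g x i < 0)
    (hg1 : ∀ x ∈ Icc (0 : Fin n → ℝ) 1, ∀ i, x i = 1 → 0 < g x i) :
    ∃ x ∈ Icc (0 : Fin n → ℝ) 1, g x = 0 := by
  by_contra! hne
  obtain ⟨δ, hδ, hδg⟩ : ∃ δ > 0, ∀ x ∈ Icc (0 : Fin n → ℝ) 1, δ ≤ ‖g x‖ :=
    isCompact_Icc.exists_forall_le' hg.norm.continuousOn
      fun x hx => norm_pos_iff.2 (hne x hx)
  have hface : ∀ i : Fin n, ∀ a : ℝ, IsCompact {x | x ∈ Icc (0 : Fin n → ℝ) 1 ∧ x i = a} :=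
    fun i a => isCompact_Icc.inter_right (isClosed_eq (continuous_apply i) continuous_const)
  have hgi : ∀ i, Continuous fun x => g x i := fun i => (continuous_apply i).comp hg
  choose η₀ hη₀ hη₀g using fun i => (hface i 0).exists_forall_le' (hgi i).neg.continuousOn
    fun x hx => neg_pos.2 (hg0 x hx.1 i hx.2)
  choose η₁ hη₁ hη₁g using fun i => (hface i 1).exists_forall_le' (hgi i).continuousOn
    fun x hx => hg1 x hx.1 i hx.2
  obtain ⟨ε, hε, hεδ, hε₀, hε₁⟩ :
      ∃ ε > 0, ε ≤ δ ∧ (∀ i, ε ≤ η₀ i) ∧ ∀ i, ε ≤ η₁ i := by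
    have h : ∀ᶠ ε in nhdsWithin (0 : ℝ) (Ioi 0),
        0 < ε ∧ ε ≤ δ ∧ (∀ i, ε ≤ η₀ i) ∧ ∀ i, ε ≤ η₁ i := by
      have hsmall : ∀ b : ℝ, 0 < b → ∀ᶠ ε in nhdsWithin (0 : ℝ) (Ioi 0), ε ≤ b := fun b hb =>
        nhdsWithin_le_nhds (Iic_mem_nhds hb)
      exact Filter.Eventually.and self_mem_nhdsWithin <| (hsmall δ hδ).and <|
        (Filter.eventually_all.2 fun i => hsmall _ (hη₀ i)).and <|
        Filter.eventually_all.2 fun i => hsmall _ (hη₁ i)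
    exact h.exists
  obtain ⟨f, hf, hfg, -⟩ := hg.exists_contDiff_approx 1 (ε := fun _ => ε) continuous_const
    fun _ => hε
  obtain ⟨C, hC⟩ : ∃ C, LipschitzOnWith C f (Icc (0 : Fin n → ℝ) 1) := by
    obtain ⟨C, hC⟩ := isCompact_Icc.exists_bound_of_continuousOn (s := Icc (0 : Fin n → ℝ) 1)
      (hf.continuous_fderiv one_ne_zero).continuousOn
    refine ⟨C.toNNReal, (convex_Icc _ _).lipschitzOnWith_of_nnnorm_fderiv_le (𝕜 := ℝ)
      (fun x _ => hf.differentiable one_ne_zero x) fun x hx => ?_⟩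
    exact NNReal.le_toNNReal_of_coe_le (hC x hx)
  have hlip : LipschitzWith (C * 1) (f ∘ cubeClamp) := by
    rw [← lipschitzOnWith_univ]
    exact hC.comp lipschitzWith_cubeClamp.lipschitzOnWith fun x _ => cubeClamp_mem x
  have hclose : ∀ x i, |f x i - g x i| < ε := fun x i =>
    (dist_le_pi_dist (f x) (g x) i).trans_lt (hfg x)
  obtain ⟨x, hx, hfx⟩ := hlip.exists_eq_zero_of_mem_cube
    (fun x hx i hxi => by
      have h1 : η₀ i ≤ -g x i := hη₀g i x ⟨hx, hxi⟩
      have h2 := (abs_lt.1 (hclose x i)).2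
      simp only [Function.comp_apply, cubeClamp_of_mem hx]
      linarith [hε₀ i])
    (fun x hx i hxi => by
      have h1 := hη₁g i x ⟨hx, hxi⟩
      have h2 := (abs_lt.1 (hclose x i)).1
      simp only [Function.comp_apply, cubeClamp_of_mem hx]
      linarith [hε₁ i])
  rw [Function.comp_apply, cubeClamp_of_mem hx] at hfx
  have h := hfg x
  rw [hfx, dist_zero_left] at h
  exact absurd (hεδ.trans (hδg x hx)) (not_le.2 h)

/-- A `1`-Lipschitz map into `ℝⁿ` with the sup norm bounds the Hausdorff outer measure of a set
from below by the Lebesgue measure of its image. -/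
theorem volume_image_le_hausdorffOuterMeasure {X : Type*} [ρ : MetricSpace X] {n : ℕ}
    {f : X → Fin n → ℝ} (hf : LipschitzWith 1 f) (s : Set X) :
    volume (f '' s) ≤ hausdorffOuterMeasure ρ n s := by
  let _ : MeasurableSpace X := borel X
  have : BorelSpace X := ⟨rfl⟩
  have h := hf.hausdorffMeasure_image_le (d := (Fintype.card (Fin n) : ℝ)) (by positivity) s
  rw [hausdorffMeasure_pi_real, ENNReal.coe_one, ENNReal.one_rpow, one_mul, Fintype.card_fin] at h
  rwa [hausdorffOuterMeasure, OuterMeasure.coe_mkMetric]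

/-- The image of the unit cube of `ℝⁿ` under a topological embedding into a metric space has
positive `n`-dimensional Hausdorff measure. -/
theorem hausdorffOuterMeasure_image_cube_pos {X : Type*} [ρ : MetricSpace X] {n : ℕ}
    {κ : (Fin n → ℝ) → X} (hκ : Continuous κ) (hinj : InjOn κ (Icc 0 1)) :
    0 < hausdorffOuterMeasure ρ n (κ '' Icc 0 1) := by
  set face : Fin n → ℝ → Set (Fin n → ℝ) := fun i a => {x | x ∈ Icc 0 1 ∧ x i = a}
  have hcompact : ∀ i a, IsCompact (face i a) := fun i a =>
    isCompact_Icc.inter_right (isClosed_eq (continuous_apply i) continuous_const)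
  have hzero : ∀ i, (0 : Fin n → ℝ) ∈ face i 0 := fun i => ⟨⟨le_rfl, zero_le_one⟩, rfl⟩
  set φ : X → Fin n → ℝ := fun z i => Metric.infDist z (κ '' face i 0)
  have hφlip : LipschitzWith 1 φ := LipschitzWith.of_dist_le_mul fun z w =>
    (dist_pi_le_iff (by positivity)).2 fun i =>
      (Metric.lipschitz_infDist_pt (κ '' face i 0)).dist_le_mul z w
  have hφκ : Continuous fun x => φ (κ x) := hφlip.continuous.comp hκ
  have hpos : ∀ i, ∀ x ∈ face i 1, 0 < φ (κ x) i := by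
    intro i x hx
    refine (((hcompact i 0).image hκ).isClosed.notMem_iff_infDist_pos
      ((nonempty_of_mem (hzero i)).image κ)).1 ?_
    rintro ⟨y, hy, hyx⟩
    have hyx' := hinj hy.1 hx.1 hyx
    have := hy.2.symm.trans ((congrFun hyx' i).trans hx.2)
    exact zero_ne_one this
  choose c hc hcφ using fun i => (hcompact i 1).exists_forall_le'
    ((continuous_apply i).comp hφκ).continuousOn (hpos i)
  have hsub : univ.pi (fun i => Ioo 0 (c i)) ⊆ φ '' (κ '' Icc 0 1) := by
    intro y hy
    obtain ⟨x, hx, hxy⟩ := (hφκ.sub (continuous_const (y := y))).exists_eq_zero_of_mem_cube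
      (fun x hx i hxi => by
        have h : φ (κ x) i = 0 := Metric.infDist_zero_of_mem (mem_image_of_mem κ ⟨hx, hxi⟩)
        simpa [h] using (hy i (mem_univ i)).1)
      (fun x hx i hxi => sub_pos.2 ((hy i (mem_univ i)).2.trans_le (hcφ i x ⟨hx, hxi⟩)))
    exact ⟨κ x, mem_image_of_mem κ hx, sub_eq_zero.1 hxy⟩
  have hvol : 0 < volume (univ.pi fun i => Ioo 0 (c i)) :=
    (isOpen_set_pi finite_univ fun _ _ => isOpen_Ioo).measure_pos volume
      (univ_pi_nonempty_iff.2 fun i => nonempty_Ioo.2 (hc i))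
  exact hvol.trans_le
    ((measure_mono hsub).trans (volume_image_le_hausdorffOuterMeasure hφlip _))

/-- If `ρ` is a metric on `ℝⁿ` (`n ≥ 1`) inducing the Euclidean topology and `A ⊆ ℝⁿ` is a
nonempty Euclidean-open set, then the `n`-dimensional Hausdorff measure of `A` with respect
to `ρ` is strictly positive. -/
theorem hausdorffMeasure_pos_of_isOpen_nonempty
    (n : ℕ) (hn : 1 ≤ n) (ρ : MetricSpace (EuclideanSpace ℝ (Fin n)))
    (hρ : ρ.toUniformSpace.toTopologicalSpace =
      (inferInstance : TopologicalSpace (EuclideanSpace ℝ (Fin n))))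
    (A : Set (EuclideanSpace ℝ (Fin n))) (hA : IsOpen A) (hA' : A.Nonempty) :
    0 < hausdorffOuterMeasure ρ n A := by
  obtain ⟨a, ha⟩ := hA'
  obtain ⟨s, hs, hsA⟩ : ∃ s : ℝ, 0 < s ∧
      ∀ x ∈ Icc (0 : Fin n → ℝ) 1, a + s • WithLp.toLp 2 x ∈ A := by
    obtain ⟨r, hr, hrA⟩ := Metric.isOpen_iff.1 hA a ha
    obtain ⟨C, hC⟩ := isCompact_Icc.exists_bound_of_continuousOn (s := Icc (0 : Fin n → ℝ) 1)
      (PiLp.continuous_toLp 2 fun _ : Fin n => ℝ).continuousOn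
    have hC0 : 0 ≤ C := (norm_nonneg _).trans (hC 0 ⟨le_rfl, zero_le_one⟩)
    refine ⟨r / (C + 1), by positivity, fun x hx => hrA ?_⟩
    rw [mem_ball_iff_norm, add_sub_cancel_left, norm_smul, Real.norm_of_nonneg (by positivity),
      div_mul_eq_mul_div, div_lt_iff₀ (by positivity)]
    exact mul_lt_mul_of_pos_left ((hC x hx).trans_lt (lt_add_one C)) hr
  set κ : (Fin n → ℝ) → EuclideanSpace ℝ (Fin n) := fun x => a + s • WithLp.toLp 2 x
  have hκ : Continuous κ :=
    continuous_const.add ((PiLp.continuous_toLp 2 fun _ : Fin n => ℝ).const_smul s)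
  have hinj : Function.Injective κ := fun x y hxy =>
    WithLp.toLp_injective 2 (smul_right_injective _ hs.ne' (add_left_cancel hxy))
  have hκρ : @Continuous _ _ _ ρ.toUniformSpace.toTopologicalSpace κ := by
    rw [hρ]
    exact hκ
  exact (hausdorffOuterMeasure_image_cube_pos (ρ := ρ) hκρ hinj.injOn).trans_le
    (measure_mono (image_subset_iff.2 hsA))
end

section
/- For every n ≥ 1 there exists a metric ρ on ℝⁿ (not inducing the Euclidean topology) such that the n-dimensional Hausdorff measure of ℝⁿ with respect to ρ vanishes: ℋⁿ_ρ(ℝⁿ) = 0. -/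
open MeasureTheory

open scoped Pointwise

/-- The Cantor set is a Lebesgue null set, since it is the union of two copies of itself
scaled by `1 / 3`. -/
theorem volume_cantorSet : volume cantorSet = 0 := by
  have hle : volume cantorSet ≤ ENNReal.ofReal (2 / 3) * volume cantorSet := by
    have hdiv : volume ((· / 3) '' cantorSet) = ENNReal.ofReal (1 / 3) * volume cantorSet := by
      have himage : (· / 3) '' cantorSet = (1 / 3 : ℝ) • cantorSet := by
        rw [← Set.image_smul]
        exact Set.image_congr fun x _ => by rw [smul_eq_mul]; ring
      rw [himage, Measure.addHaar_smul_of_nonneg _ (by norm_num), Module.finrank_self, pow_one]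
    have hshift : volume ((fun x ↦ (2 + x) / 3) '' cantorSet) =
        ENNReal.ofReal (1 / 3) * volume cantorSet := by
      have himage : (fun x : ℝ ↦ (2 + x) / 3) '' cantorSet =
          (fun x : ℝ ↦ 2 / 3 + x) '' ((· / 3) '' cantorSet) := by
        rw [Set.image_image]
        exact Set.image_congr fun x _ => by ring
      rw [himage, Set.image_add_left, measure_preimage_add, hdiv]
    calc volume cantorSet
        ≤ volume ((· / 3) '' cantorSet) + volume ((fun x ↦ (2 + x) / 3) '' cantorSet) := by
          conv_lhs => rw [cantorSet_eq_union_halves]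
          exact measure_union_le _ _
      _ = ENNReal.ofReal (2 / 3) * volume cantorSet := by
          rw [hdiv, hshift, ← add_mul, ← ENNReal.ofReal_add (by norm_num) (by norm_num)]
          norm_num
  by_contra hne
  have hlt : ENNReal.ofReal (2 / 3) * volume cantorSet < 1 * volume cantorSet :=
    (ENNReal.mul_lt_mul_iff_left hne isCompact_cantorSet.measure_lt_top.ne).2
      (by rw [ENNReal.ofReal_lt_one]; norm_num)
  rw [one_mul] at hlt
  exact hle.not_gt hlt

theorem hausdorffMeasure_cantorSet {d : ℝ} (hd : 1 ≤ d) :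
    Measure.hausdorffMeasure d cantorSet = 0 := by
  refine le_antisymm ((Measure.hausdorffMeasure_mono hd cantorSet).trans_eq ?_) zero_le
  rw [hausdorffMeasure_real, volume_cantorSet]

/-- For a metric pulled back from another metric space along an injection `f`, the Hausdorff outer
measure of the whole space is the Hausdorff measure of the range of `f`. -/
theorem hausdorffOuterMeasure_induced_univ {X Y : Type*} [MetricSpace Y] [MeasurableSpace Y]
    [BorelSpace Y] (f : X → Y) (hf : Function.Injective f) {d : ℝ} (hd : 0 ≤ d) :
    hausdorffOuterMeasure (MetricSpace.induced f hf inferInstance) d Set.univ =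
      Measure.hausdorffMeasure d (Set.range f) := by
  let : MetricSpace X := MetricSpace.induced f hf inferInstance
  have hisom : Isometry f := fun _ _ => rfl
  rw [← Set.image_univ, Measure.hausdorffMeasure, ← Measure.coe_toOuterMeasure,
    Measure.mkMetric_toOuterMeasure, ← OuterMeasure.comap_apply,
    OuterMeasure.isometry_comap_mkMetric _ hisom (Or.inl (ENNReal.monotone_rpow_of_nonneg hd))]
  rfl

theorem nonempty_equiv_cantorSet_euclideanSpace {n : ℕ} (hn : 1 ≤ n) :
    Nonempty (cantorSet ≃ EuclideanSpace ℝ (Fin n)) := by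
  rw [← Cardinal.eq, Cardinal.mk_congr cantorSetEquivNatToBool,
    Cardinal.mk_congr (EuclideanSpace.equiv (Fin n) ℝ).toEquiv]
  simp [Cardinal.mk_real, Cardinal.power_nat_eq Cardinal.aleph0_le_continuum hn]

/-- For every `n ≥ 1` there is a metric `ρ` on `ℝⁿ` (necessarily not inducing the Euclidean
topology) for which the `n`-dimensional Hausdorff measure of `ℝⁿ` vanishes. -/
theorem exists_metric_hausdorffMeasure_univ_eq_zero (n : ℕ) (hn : 1 ≤ n) :
    ∃ ρ : MetricSpace (EuclideanSpace ℝ (Fin n)),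
      ρ.toUniformSpace.toTopologicalSpace ≠
        (inferInstance : TopologicalSpace (EuclideanSpace ℝ (Fin n))) ∧
      hausdorffOuterMeasure ρ n (Set.univ : Set (EuclideanSpace ℝ (Fin n))) = 0 := by
  obtain ⟨g⟩ := nonempty_equiv_cantorSet_euclideanSpace hn
  let f : EuclideanSpace ℝ (Fin n) → ℝ := fun x => g.symm x
  have hf : Function.Injective f := Subtype.val_injective.comp g.symm.injective
  have hrange : Set.range f = cantorSet := by
    rw [show f = Subtype.val ∘ g.symm from rfl, g.symm.surjective.range_comp, Subtype.range_coe]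
  refine ⟨MetricSpace.induced f hf inferInstance, fun htop => ?_, ?_⟩
  · have hind : Topology.IsInducing f := ⟨htop.symm⟩
    have : NeZero n := ⟨by omega⟩
    refine noncompact_univ (EuclideanSpace ℝ (Fin n)) (hind.isCompact_iff.2 ?_)
    rw [Set.image_univ, hrange]
    exact isCompact_cantorSet
  · rw [hausdorffOuterMeasure_induced_univ f hf n.cast_nonneg, hrange]
    exact hausdorffMeasure_cantorSet (mod_cast hn)
end

section
/- Let (X, ρ) be a compact metric space, f : X → ℝ continuous, and for ε > 0 let f^ε(x) := min_{z ∈ X} [ f(z) + (1/ε) ρ(x,z) ]; set f^0 := f. Then the map (ε, x) ↦ f^ε(x) is jointly continuous on [0, ∞) × X. -/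
open Topology

/-- The infimum of `f z + t * dist x z` over a compact space is jointly continuous in `(t, x)`. -/
theorem continuous_iInf_add_mul_dist {X : Type*} [PseudoMetricSpace X] [CompactSpace X]
    {f : X → ℝ} (hf : Continuous f) :
    Continuous fun p : ℝ × X => ⨅ z : X, (f z + p.1 * dist p.2 z) := by
  have h := (isCompact_univ (X := X)).continuous_sInf
    (f := fun (p : ℝ × X) (z : X) => f z + p.1 * dist p.2 z)
    (by simp only [Function.HasUncurry.uncurry, id]; fun_prop)
  simpa only [Set.image_univ, sInf_range] using h

/-- For all small `ε > 0`, the inf-convolution of `f` at scale `ε` is uniformly close to `f`. -/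
theorem exists_forall_abs_iInf_add_dist_sub_le {X : Type*} [PseudoMetricSpace X]
    [CompactSpace X] {f : X → ℝ} (hf : Continuous f) {η : ℝ} (hη : 0 < η) :
    ∃ r > 0, ∀ ε, 0 < ε → ε < r → ∀ x,
      |(⨅ z : X, (f z + (1 / ε) * dist x z)) - f x| ≤ η := by
  obtain ⟨δ, hδ, hfδ⟩ := Metric.uniformContinuous_iff.1
    (CompactSpace.uniformContinuous_of_continuous hf) η hη
  obtain ⟨M, hM⟩ := (isCompact_univ (X := X)).exists_bound_of_continuousOn hf.continuousOn
  simp only [Set.mem_univ, true_imp_iff, Real.norm_eq_abs] at hM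
  refine ⟨δ / (2 * |M| + 1), by positivity, fun ε hε hεr x => ?_⟩
  have hne : Nonempty X := ⟨x⟩
  have lower (z : X) : f x - η ≤ f z + (1 / ε) * dist x z := by
    rcases lt_or_ge (dist x z) δ with hxz | hxz
    · have hfxz := hfδ hxz
      rw [Real.dist_eq, abs_lt] at hfxz
      have : 0 ≤ (1 / ε) * dist x z := by positivity
      linarith
    · have hbound : 2 * |M| + 1 ≤ (1 / ε) * dist x z := by
        rw [lt_div_iff₀ (by positivity)] at hεr
        rw [one_div_mul_eq_div, le_div_iff₀ hε]
        linarith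
      have := abs_le.1 (hM x)
      have := abs_le.1 (hM z)
      have := le_abs_self M
      linarith
  have upper : ⨅ z : X, (f z + (1 / ε) * dist x z) ≤ f x := by
    simpa using ciInf_le ⟨f x - η, Set.forall_mem_range.2 lower⟩ x
  rw [abs_le]
  constructor <;> linarith [le_ciInf lower]

/-- On a compact metric space, the map `(ε, x) ↦ f^ε(x)`, where
`f^ε(x) = min_{z} (f z + (1/ε) ρ(x,z))` for `ε > 0` and `f^0 = f`, is jointly
continuous on `[0, ∞) × X`. -/
theorem infConvolution_jointly_continuous {X : Type*} [MetricSpace X] [CompactSpace X]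
    [Nonempty X] (f : X → ℝ) (hf : Continuous f) :
    ContinuousOn
      (fun p : ℝ × X =>
        if p.1 = 0 then f p.2 else ⨅ z : X, (f z + (1 / p.1) * dist p.2 z))
      (Set.Ici (0 : ℝ) ×ˢ (Set.univ : Set X)) := by
  rintro ⟨ε₀, x₀⟩ -
  rcases eq_or_ne ε₀ 0 with rfl | hε₀
  · rw [ContinuousWithinAt, Metric.tendsto_nhds]
    intro η hη
    obtain ⟨r, hr, hclose⟩ := exists_forall_abs_iInf_add_dist_sub_le hf (half_pos hη)
    have hsmall : ∀ᶠ p : ℝ × X in 𝓝 (0, x₀), p.1 < r :=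
      continuous_fst.continuousAt.eventually_lt continuousAt_const hr
    have hnear : ∀ᶠ p : ℝ × X in 𝓝 (0, x₀), dist (f p.2) (f x₀) < η / 2 :=
      Metric.tendsto_nhds.1 (hf.comp continuous_snd).continuousAt _ (half_pos hη)
    filter_upwards [hsmall.filter_mono nhdsWithin_le_nhds,
      hnear.filter_mono nhdsWithin_le_nhds, self_mem_nhdsWithin] with p hpr hpx hp
    simp only [if_true]
    split_ifs with h
    · linarith
    · have := hclose p.1 (lt_of_le_of_ne hp.1 (Ne.symm h)) hpr p.2
      rw [← Real.dist_eq] at this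
      linarith [dist_triangle (⨅ z : X, (f z + (1 / p.1) * dist p.2 z)) (f p.2) (f x₀)]
  · have hcont : ContinuousAt
        (fun p : ℝ × X => ⨅ z : X, (f z + (1 / p.1) * dist p.2 z)) (ε₀, x₀) :=
      (continuous_iInf_add_mul_dist hf).continuousAt.comp
        (f := fun p : ℝ × X => (1 / p.1, p.2))
        ((continuousAt_const.div continuousAt_fst hε₀).prodMk continuousAt_snd)
    refine (hcont.congr ?_).continuousWithinAt
    filter_upwards [(continuousAt_fst (p := (ε₀, x₀))).eventually_ne hε₀] with p hp
    rw [if_neg hp]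
end

section
/- Let ρ be a metric on ℝⁿ whose induced topology coincides with the Euclidean topology, let 𝔹 be the closed Euclidean unit ball, write the identity map as id(x) = (π₁(x), …, πₙ(x)), and for ε > 0 and i = 1, …, n define π_i^ε(x) := min_{z ∈ 𝔹} [ π_i(z) + (1/ε) ρ(x,z) ] and F^ε := (π₁^ε, …, πₙ^ε) : 𝔹 → ℝⁿ. Then there exists ε > 0 such that F^ε(𝔹) has nonempty interior in ℝⁿ; more precisely, whenever sup_{x ∈ 𝔹} ‖F^ε(x) − x‖ ≤ 1/2, the open ball B(0, 1/2) is contained in F^ε(𝔹). -/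
open Set Metric MeasureTheory Module

theorem LinearMap.det_one_add_smul_eq_sum_lagrange {K V : Type*} [Field K] [AddCommGroup V]
    [Module K V] [FiniteDimensional K V] [DecidableEq K] (A : V →ₗ[K] V)
    (s : Finset K) (hs : finrank K V < s.card) (t : K) :
    LinearMap.det (1 + t • A) =
      ∑ a ∈ s, LinearMap.det (1 + a • A) * (Lagrange.basis s _root_.id a).eval t := by
  set b := finBasis K V
  set M := LinearMap.toMatrix b b A
  set P : Polynomial K := Matrix.det ((Polynomial.X : Polynomial K) • M.map Polynomial.C +
    (1 : Matrix _ _ K).map Polynomial.C)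
  have hP (r : K) : P.eval r = LinearMap.det (1 + r • A) := by
    rw [← LinearMap.det_toMatrix b, ← Polynomial.coe_evalRingHom, RingHom.map_det]
    congr 1
    ext i j
    by_cases hij : i = j <;>
      simp [M, hij, LinearMap.toMatrix_one] <;> ring
  have hdeg : P.degree < s.card :=
    (Polynomial.natDegree_le_iff_degree_le.1
      ((Polynomial.natDegree_det_X_add_C_le M 1).trans_eq (Fintype.card_fin _))).trans_lt
      (by exact_mod_cast hs)
  rw [← hP, Lagrange.eq_interpolate (v := _root_.id) (injOn_id _) hdeg, Lagrange.interpolate_apply,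
    Polynomial.eval_finsetSum]
  simp [hP]

theorem ContinuousLinearMap.det_one_add_pos {E : Type*} [NormedAddCommGroup E] [NormedSpace ℝ E]
    [FiniteDimensional ℝ E] {A : E →L[ℝ] E} (hA : ‖A‖ < 1) : 0 < (1 + A).det := by
  have : CompleteSpace E := FiniteDimensional.complete ℝ E
  have hne : ∀ s ∈ Icc (0 : ℝ) 1, (1 + s • A).det ≠ 0 := by
    intro s hs
    have hlt : ‖-(s • A)‖ < 1 := by
      rw [norm_neg, norm_smul, Real.norm_of_nonneg hs.1]
      nlinarith [norm_nonneg A, hs.2]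
    have hu : IsUnit (1 + s • A) := by simpa using isUnit_one_sub_of_norm_lt_one hlt
    exact ((hu.map ContinuousLinearMap.toLinearMapRingHom).map LinearMap.det).ne_zero
  have hcont : ContinuousOn (fun s : ℝ ↦ (1 + s • A).det) (Icc 0 1) :=
    (ContinuousLinearMap.continuous_det.comp (by fun_prop)).continuousOn
  by_contra! hneg
  obtain ⟨s, hs, h0⟩ := intermediate_value_Icc' zero_le_one hcont
    (show (0 : ℝ) ∈ Icc _ _ by
      refine ⟨by simpa using hneg, ?_⟩
      simp only [zero_smul, add_zero]
      exact zero_le_one.trans_eq LinearMap.det_id.symm)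
  exact hne s hs h0

theorem LipschitzOnWith.image_ball_of_sub_id {E : Type*} [NormedAddCommGroup E] [NormedSpace ℝ E]
    [FiniteDimensional ℝ E] {f : E → E} {c : NNReal} {R : ℝ} (hc : c < 1)
    (hf : LipschitzOnWith c (f - id) (closedBall 0 R)) (hmaps : MapsTo f (ball 0 R) (ball 0 R))
    (hsphere : ∀ x ∈ sphere (0 : E) R, f x = x) :
    InjOn f (ball 0 R) ∧ f '' ball 0 R = ball 0 R := by
  have : CompleteSpace E := FiniteDimensional.complete ℝ E
  have hclosed : ApproximatesLinearOn f
      (ContinuousLinearEquiv.refl ℝ E : E →L[ℝ] E) (closedBall 0 R) c :=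
    hf.approximatesLinearOn
  have happrox := hclosed.mono_set ball_subset_closedBall
  have hN : Subsingleton E ∨
      c < ‖((ContinuousLinearEquiv.refl ℝ E).symm : E →L[ℝ] E)‖₊⁻¹ := by
    rcases subsingleton_or_nontrivial E with h | h
    · exact .inl h
    · right
      have : ‖((ContinuousLinearEquiv.refl ℝ E).symm : E →L[ℝ] E)‖₊ = 1 :=
        nnnorm_one (G := E →L[ℝ] E)
      simpa [this] using hc
  refine ⟨happrox.injOn hN, hmaps.image_subset.antisymm ?_⟩
  rcases (ball (0 : E) R).eq_empty_or_nonempty with h | ⟨x, hx⟩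
  · simp [h]
  have hopen : IsOpen (f '' ball 0 R) :=
    happrox.open_image (ContinuousLinearEquiv.toNonlinearRightInverse _) isOpen_ball hN
  refine (convex_ball (0 : E) R).isPreconnected.subset_of_closure_inter_subset hopen
    ⟨f x, hmaps hx, mem_image_of_mem f hx⟩ ?_
  rintro y ⟨hy, hyball⟩
  have hcompact : IsCompact (f '' closedBall 0 R) :=
    (isCompact_closedBall 0 R).image_of_continuousOn hclosed.continuousOn
  obtain ⟨z, hz, rfl⟩ := closure_minimal (image_mono ball_subset_closedBall) hcompact.isClosed hy
  by_cases hzb : z ∈ ball (0 : E) R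
  · exact mem_image_of_mem f hzb
  · have hzs : z ∈ sphere (0 : E) R := by
      rw [← closedBall_sdiff_ball]; exact ⟨hz, hzb⟩
    rw [hsphere z hzs] at hyball
    exact absurd hyball hzb

/-- For small `t`, the map `x ↦ x + t • v x` is an orientation-preserving diffeomorphism of the ball,
so its Jacobian determinant integrates to the volume of the ball. -/
theorem integral_det_one_add_smul_fderiv {E : Type*} [NormedAddCommGroup E] [NormedSpace ℝ E]
    [FiniteDimensional ℝ E] [MeasurableSpace E] [BorelSpace E] (μ : Measure E)
    [μ.IsAddHaarMeasure] {v : E → E} {c : NNReal} {R t : ℝ}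
    (hv : ContDiff ℝ 1 v) (hlip : LipschitzOnWith c v (closedBall 0 R))
    (hbound : ∀ x ∈ closedBall (0 : E) R, ‖x + v x‖ ≤ R) (hsphere : ∀ x ∈ sphere (0 : E) R, v x = 0)
    (ht0 : 0 ≤ t) (ht1 : t < 1) (hct : t * c < 1) :
    IntegrableOn (fun x ↦ (1 + t • fderiv ℝ v x).det) (ball 0 R) μ ∧
      ∫ x in ball 0 R, (1 + t • fderiv ℝ v x).det ∂μ = μ.real (ball 0 R) := by
  lift t to NNReal using ht0
  set f : E → E := fun x ↦ x + t • v x with hf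
  have hflip : LipschitzOnWith (t * c) (f - id) (closedBall 0 R) := by
    refine LipschitzOnWith.of_dist_le_mul fun x hx y hy ↦ ?_
    have := hlip.dist_le_mul x hx y hy
    simp only [hf, Pi.sub_apply, id, add_sub_cancel_left]
    rw [NNReal.smul_def, NNReal.smul_def, dist_smul₀, NNReal.coe_mul, mul_assoc,
      Real.norm_of_nonneg t.coe_nonneg]
    gcongr
  have hmaps : MapsTo f (ball 0 R) (ball 0 R) := by
    intro x hx
    have h1 := hbound x (ball_subset_closedBall hx)
    rw [mem_ball_zero_iff] at hx ⊢
    have : f x = (1 - (t : ℝ)) • x + (t : ℝ) • (x + v x) := by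
      simp only [hf, NNReal.smul_def]; module
    rw [this]
    refine (norm_add_le _ _).trans_lt ?_
    rw [norm_smul, norm_smul, Real.norm_of_nonneg t.coe_nonneg,
      Real.norm_of_nonneg (sub_pos.2 ht1).le]
    nlinarith [t.coe_nonneg]
  obtain ⟨hinj, himage⟩ := hflip.image_ball_of_sub_id (by exact_mod_cast hct) hmaps
    fun x hx ↦ by simp [hf, hsphere x hx]
  have hderiv : ∀ x ∈ ball (0 : E) R,
      HasFDerivWithinAt f (1 + (t : ℝ) • fderiv ℝ v x) (ball 0 R) x := fun x _ ↦
    ((hasFDerivAt_id x).add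
      ((hv.differentiable one_ne_zero x).hasFDerivAt.const_smul (t : ℝ))).hasFDerivWithinAt
  have hpos : ∀ x ∈ ball (0 : E) R, 0 < (1 + (t : ℝ) • fderiv ℝ v x).det := by
    intro x hx
    refine ContinuousLinearMap.det_one_add_pos ?_
    have := norm_fderiv_le_of_lipschitzOn ℝ (closedBall_mem_nhds_of_mem hx) hlip
    rw [norm_smul, Real.norm_of_nonneg t.coe_nonneg]
    exact (mul_le_mul_of_nonneg_left this t.coe_nonneg).trans_lt hct
  have hcongr : EqOn (fun x ↦ |(1 + (t : ℝ) • fderiv ℝ v x).det| • (1 : ℝ))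
      (fun x ↦ (1 + (t : ℝ) • fderiv ℝ v x).det) (ball 0 R) := fun x hx ↦ by
    simp [abs_of_pos (hpos x hx)]
  constructor
  · refine IntegrableOn.congr_fun ?_ hcongr measurableSet_ball
    rw [← integrableOn_image_iff_integrableOn_abs_det_fderiv_smul μ measurableSet_ball hderiv hinj
      (fun _ ↦ (1 : ℝ)), himage]
    exact integrableOn_const measure_ball_lt_top.ne
  · rw [← setIntegral_congr_fun measurableSet_ball hcongr,
      ← integral_image_eq_integral_abs_det_fderiv_smul μ measurableSet_ball hderiv hinj
      (fun _ ↦ (1 : ℝ)), himage]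
    simp

/-- There is no `C¹` retraction of a closed ball onto its boundary sphere. -/
theorem exists_sphere_ne_of_contDiff_of_norm_eq {E : Type*} [NormedAddCommGroup E]
    [InnerProductSpace ℝ E] [FiniteDimensional ℝ E] {r : E → E} {R : ℝ} (hR : 0 < R)
    (hr : ContDiff ℝ 1 r) (hnorm : ∀ x, ‖r x‖ = R) : ∃ x ∈ sphere (0 : E) R, r x ≠ x := by
  borelize E
  by_contra! hid
  set μ : Measure E := Measure.addHaar
  set v : E → E := fun x ↦ r x - x with hv_def
  have hv : ContDiff ℝ 1 v := hr.sub contDiff_id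
  obtain ⟨c, hc⟩ := hv.contDiffOn.exists_lipschitzOnWith one_ne_zero
    (convex_closedBall 0 R) (isCompact_closedBall 0 R)
  have hsmall (t : ℝ) (ht : t ∈ Ioo (0 : ℝ) (1 / (1 + c))) :=
    integral_det_one_add_smul_fderiv μ (t := t) hv hc (fun x _ ↦ by simp [hv_def, hnorm])
      (fun x hx ↦ by simp [hv_def, hid x hx]) ht.1.le
      (ht.2.trans_le (div_le_one_of_le₀ (by simp) (by positivity)))
      (by
        have h2 := (lt_div_iff₀ (by positivity : (0 : ℝ) < 1 + c)).1 ht.2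
        linarith [ht.1])
  obtain ⟨s, hs, hcard⟩ := (Ioo_infinite
    (show (0 : ℝ) < 1 / (1 + c) by positivity)).exists_subset_card_eq (finrank ℝ E + 1)
  have hdet0 (x : E) : (1 + (1 : ℝ) • fderiv ℝ v x).det = 0 := by
    have hfd : 1 + (1 : ℝ) • fderiv ℝ v x = fderiv ℝ r x := by
      rw [hv_def, fderiv_fun_sub (hr.differentiable one_ne_zero x) differentiableAt_fun_id,
        fderiv_fun_id, one_smul]
      exact add_sub_cancel _ _
    rw [hfd]
    have horth (w : E) : inner ℝ (r x) (fderiv ℝ r x w) = 0 := by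
      have h1 := ((hr.differentiable one_ne_zero x).hasFDerivAt.inner ℝ
        (hr.differentiable one_ne_zero x).hasFDerivAt)
      have h2 : HasFDerivAt (fun y ↦ inner ℝ (r y) (r y)) (0 : E →L[ℝ] ℝ) x := by
        simp only [real_inner_self_eq_norm_sq, hnorm]
        exact hasFDerivAt_const _ _
      have h3 := DFunLike.congr_fun (h1.unique h2) w
      simpa [real_inner_comm] using h3
    by_contra hne
    have hsurj : Function.Surjective (fderiv ℝ r x) :=
      ((LinearMap.equivOfDetNeZero (fderiv ℝ r x : E →ₗ[ℝ] E) hne)).surjective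
    obtain ⟨w, hw⟩ := hsurj (r x)
    have := horth w
    rw [hw, real_inner_self_eq_norm_sq, hnorm] at this
    exact hR.ne' (pow_eq_zero_iff two_ne_zero |>.1 this)
  have hlag (x : E) :
      ∑ a ∈ s, (1 + a • fderiv ℝ v x).det * (Lagrange.basis s id a).eval 1 = 0 := by
    rw [← hdet0 x]
    exact (LinearMap.det_one_add_smul_eq_sum_lagrange (fderiv ℝ v x : E →ₗ[ℝ] E) s (by omega) 1).symm
  have hint := integral_finsetSum (μ := μ.restrict (ball 0 R)) s
    (f := fun a x ↦ (1 + a • fderiv ℝ v x).det * (Lagrange.basis s id a).eval 1)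
    fun a ha ↦ (hsmall a (hs ha)).1.mul_const _
  simp only [hlag, integral_zero, integral_mul_const] at hint
  rw [Finset.sum_congr rfl fun a ha ↦ by rw [(hsmall a (hs ha)).2], ← Finset.mul_sum,
    ← Polynomial.eval_finsetSum,
    Lagrange.sum_basis (injOn_id _) (Finset.card_pos.1 (by omega)), Polynomial.eval_one, mul_one] at hint
  exact (ENNReal.toReal_pos (measure_ball_pos μ 0 hR).ne' measure_ball_lt_top.ne).ne hint

/-- A compactly supported continuous perturbation of the identity is surjective. -/
theorem surjective_add_of_hasCompactSupport {E : Type*} [NormedAddCommGroup E]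
    [InnerProductSpace ℝ E] [FiniteDimensional ℝ E] {g : E → E} (hg : Continuous g)
    (hsupp : HasCompactSupport g) : Function.Surjective fun x ↦ x + g x := by
  intro y
  by_contra! hy
  have hne (x : E) : 0 < ‖x + g x - y‖ := norm_pos_iff.2 (sub_ne_zero.2 (hy x))
  obtain ⟨k, hk, hclose, hsub⟩ := hg.exists_contDiff_approx 1
    (ε := fun x ↦ ‖x + g x - y‖) (by fun_prop) hne
  have hG (x : E) : x + y + k (x + y) - y ≠ 0 := fun h ↦ by
    have := hclose (x + y)
    rw [dist_comm, dist_eq_norm] at this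
    refine this.ne (congr_arg _ ?_)
    rw [← sub_zero (x + y + g (x + y) - y), ← h]
    abel
  obtain ⟨R, hR, hsR⟩ := hsupp.isCompact.isBounded.subset_ball_lt 0 y
  have hcd : ContDiff ℝ 1 fun x ↦ x + y + k (x + y) - y := by
    have := hk.comp (contDiff_id.add contDiff_const : ContDiff ℝ _ fun x : E ↦ x + y)
    exact ((contDiff_id.add contDiff_const).add this).sub contDiff_const
  obtain ⟨x, hx, hxne⟩ := exists_sphere_ne_of_contDiff_of_norm_eq (E := E) hR
    (r := fun x ↦ (R / ‖x + y + k (x + y) - y‖) • (x + y + k (x + y) - y))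
    ((contDiff_const.div (hcd.norm ℝ hG) fun x ↦ norm_ne_zero_iff.2 (hG x)).smul hcd)
    fun x ↦ by
      rw [norm_smul, norm_div, norm_norm, div_mul_cancel₀ _ (norm_ne_zero_iff.2 (hG x)),
        Real.norm_of_nonneg hR.le]
  have hzero : k (x + y) = 0 := by
    by_contra h
    have := hsR (subset_tsupport g (hsub h))
    rw [mem_sphere_zero_iff_norm] at hx
    simp [hx] at this
  rw [mem_sphere_zero_iff_norm] at hx
  simp [hzero, hx, hR.ne'] at hxne

/-- A continuous map that moves no point of the closed unit ball by more than `δ` covers the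
open ball of radius `1 - δ`. -/
theorem ball_subset_image_closedBall_of_norm_sub_le {E : Type*} [NormedAddCommGroup E]
    [InnerProductSpace ℝ E] [FiniteDimensional ℝ E] {f : E → E} {δ : ℝ}
    (hf : ContinuousOn f (closedBall 0 1)) (hδ : ∀ x ∈ closedBall (0 : E) 1, ‖f x - x‖ ≤ δ) :
    ball 0 (1 - δ) ⊆ f '' closedBall 0 1 := by
  intro y hy
  set p : E → E := fun x ↦ (max 1 ‖x‖)⁻¹ • x with hp
  have hmax (x : E) : 0 < max 1 ‖x‖ := lt_max_of_lt_left one_pos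
  have hpcont : Continuous p :=
    ((continuous_const.max continuous_norm).inv₀ fun x ↦ (hmax x).ne').smul continuous_id
  have hpball (x : E) : p x ∈ closedBall (0 : E) 1 := by
    rw [mem_closedBall_zero_iff, hp, norm_smul, norm_inv, Real.norm_of_nonneg (hmax x).le,
      inv_mul_le_iff₀ (hmax x), mul_one]
    exact le_max_right _ _
  set χ : E → ℝ := fun x ↦ max 0 (min 1 (2 - ‖x‖)) with hχ
  have hχ0 (x : E) : 0 ≤ χ x := le_max_left _ _
  have hχ1 (x : E) : χ x ≤ 1 := max_le zero_le_one (min_le_left _ _)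
  have hδ0 : 0 ≤ δ := (norm_nonneg _).trans (hδ 0 (by simp))
  have hχcont : Continuous χ := by fun_prop
  have hcomp : Continuous fun x ↦ f (p x) := hf.comp_continuous hpcont hpball
  obtain ⟨x, hx⟩ := surjective_add_of_hasCompactSupport (g := fun x ↦ χ x • (f (p x) - p x))
    (hχcont.smul (hcomp.sub hpcont))
    (HasCompactSupport.intro (isCompact_closedBall (0 : E) 2) fun x hx ↦ by
      have : χ x = 0 := by
        simp only [mem_closedBall_zero_iff, not_le] at hx
        simp only [hχ]
        exact max_eq_left ((min_le_right _ _).trans (by linarith))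
      simp [this]) y
  simp only at hx
  rcases le_or_gt ‖x‖ 1 with h | h
  · refine ⟨x, by simpa using h, ?_⟩
    have h1 : χ x = 1 := by
      simp only [hχ]; rw [min_eq_left (by linarith), max_eq_right zero_le_one]
    have h2 : p x = x := by simp [hp, max_eq_left h]
    simpa [h1, h2] using hx
  · exfalso
    rw [mem_ball_zero_iff, ← hx] at hy
    have h1 : ‖χ x • (f (p x) - p x)‖ ≤ δ := by
      rw [norm_smul, Real.norm_of_nonneg (hχ0 x)]
      nlinarith [hδ _ (hpball x), hχ1 x, hχ0 x, norm_nonneg (f (p x) - p x)]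
    have h2 := norm_sub_le (x + χ x • (f (p x) - p x)) (χ x • (f (p x) - p x))
    rw [add_sub_cancel_right] at h2
    linarith

theorem IsCompact.exists_dist_le_add_mul {X : Type*} [PseudoMetricSpace X] {K : Set X}
    (hK : IsCompact K) {d : X → X → ℝ} (hd : Continuous fun p : X × X ↦ d p.1 p.2)
    (hnonneg : ∀ x y, 0 ≤ d x y) (hpos : ∀ x y, x ≠ y → 0 < d x y) {η : ℝ} (hη : 0 < η) :
    ∃ L > 0, ∀ x ∈ K, ∀ y ∈ K, dist x y ≤ η + L * d x y := by
  have hC : IsCompact ((K ×ˢ K) ∩ {p : X × X | η ≤ dist p.1 p.2}) :=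
    (hK.prod hK).inter_right (isClosed_le continuous_const continuous_dist)
  obtain ⟨m, hm, hmle⟩ := hC.exists_forall_le' (f := fun p ↦ d p.1 p.2) hd.continuousOn
    (a := 0) (fun p hp ↦ hpos _ _ fun h ↦ by
      have := hp.2
      simp only [mem_ofPred_eq, h, dist_self] at this
      linarith)
  have hD := diam_nonneg (s := K)
  refine ⟨(diam K + 1) / m, by positivity, fun x hx y hy ↦ ?_⟩
  have hLd : 0 ≤ (diam K + 1) / m * d x y := mul_nonneg (by positivity) (hnonneg x y)
  rcases lt_or_ge (dist x y) η with h | h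
  · linarith
  · have h1 := dist_le_diam_of_mem hK.isBounded hx hy
    have h2 : (diam K + 1) / m * m ≤ (diam K + 1) / m * d x y := by
      gcongr
      exact hmle (x, y) ⟨⟨hx, hy⟩, h⟩
    rw [div_mul_cancel₀ _ hm.ne'] at h2
    linarith

theorem EuclideanSpace.norm_le_card_mul {ι : Type*} [Fintype ι] {x : EuclideanSpace ℝ ι} {η : ℝ}
    (h : ∀ i, |x i| ≤ η) : ‖x‖ ≤ Fintype.card ι * η := by
  classical
  calc ‖x‖ = ‖∑ i, x i • EuclideanSpace.basisFun ι ℝ i‖ := by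
        conv_lhs => rw [← (EuclideanSpace.basisFun ι ℝ).sum_repr x]
        simp
    _ ≤ ∑ _i : ι, η := norm_sum_le_of_le _ fun i _ ↦ by simpa [norm_smul] using h i
    _ = Fintype.card ι * η := by simp


/-- Let `ρ` be a metric on `ℝⁿ` inducing the Euclidean topology, `𝔹` the closed Euclidean
unit ball, and for `ε > 0` let `F^ε = (π₁^ε, …, πₙ^ε)` where
`π_i^ε(x) = min_{z ∈ 𝔹} (π_i(z) + (1/ε) ρ(x,z))` are the inf-convolutions of the
coordinates of the identity. Then some `F^ε(𝔹)` has nonempty interior; more precisely,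
whenever `sup_{x ∈ 𝔹} ‖F^ε(x) − x‖ ≤ 1/2`, the open ball `B(0, 1/2)` is contained in
`F^ε(𝔹)`. -/
theorem exists_infConvolution_image_nonempty_interior (n : ℕ)
    (ρ : MetricSpace (EuclideanSpace ℝ (Fin n)))
    (hρ : ρ.toUniformSpace.toTopologicalSpace =
      (inferInstance : TopologicalSpace (EuclideanSpace ℝ (Fin n))))
    (F : ℝ → EuclideanSpace ℝ (Fin n) → EuclideanSpace ℝ (Fin n))
    (hF : ∀ (ε : ℝ) (x : EuclideanSpace ℝ (Fin n)) (i : Fin n),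
      F ε x i = ⨅ z : Metric.closedBall (0 : EuclideanSpace ℝ (Fin n)) 1,
        ((z : EuclideanSpace ℝ (Fin n)) i + (1 / ε) * ρ.dist x z)) :
    (∃ ε > (0 : ℝ),
      (interior (F ε '' Metric.closedBall (0 : EuclideanSpace ℝ (Fin n)) 1)).Nonempty) ∧
    ∀ ε > (0 : ℝ),
      (∀ x ∈ Metric.closedBall (0 : EuclideanSpace ℝ (Fin n)) 1, ‖F ε x - x‖ ≤ 1 / 2) →
      Metric.ball (0 : EuclideanSpace ℝ (Fin n)) (1 / 2) ⊆
        F ε '' Metric.closedBall (0 : EuclideanSpace ℝ (Fin n)) 1 := by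
  set B : Set (EuclideanSpace ℝ (Fin n)) := closedBall 0 1
  have hB : IsCompact B := isCompact_closedBall 0 1
  have : Nonempty B := ⟨⟨0, by simp [B]⟩⟩
  have hd : Continuous fun p : EuclideanSpace ℝ (Fin n) × EuclideanSpace ℝ (Fin n) ↦
      ρ.dist p.1 p.2 := by
    have := @continuous_dist _ ρ.toPseudoMetricSpace
    rwa [hρ] at this
  have hnonneg (x y : EuclideanSpace ℝ (Fin n)) : 0 ≤ ρ.dist x y :=
    @dist_nonneg _ ρ.toPseudoMetricSpace x y
  have hpos (x y : EuclideanSpace ℝ (Fin n)) (h : x ≠ y) : 0 < ρ.dist x y :=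
    (@dist_pos _ ρ x y).2 h
  have hself (x : EuclideanSpace ℝ (Fin n)) : ρ.dist x x = 0 :=
    @dist_self _ ρ.toPseudoMetricSpace x
  have hcont (ε : ℝ) : Continuous (F ε) := by
    rw [← (PiLp.homeomorph 2 _).comp_continuous_iff, continuous_pi_iff]
    intro i
    have := hB.continuous_sInf
      (f := fun x z : EuclideanSpace ℝ (Fin n) ↦ z i + (1 / ε) * ρ.dist x z)
      (by
        refine Continuous.add ?_ (continuous_const.mul hd)
        exact (EuclideanSpace.proj (𝕜 := ℝ) i).continuous.comp continuous_snd)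
    convert this using 2 with x
    rw [sInf_image']
    exact hF ε x i
  have hcover (ε : ℝ) (h : ∀ x ∈ B, ‖F ε x - x‖ ≤ 1 / 2) : ball 0 (1 / 2) ⊆ F ε '' B := by
    have := ball_subset_image_closedBall_of_norm_sub_le (hcont ε).continuousOn h
    rwa [sub_half] at this
  refine ⟨?_, fun ε _ ↦ hcover ε⟩
  obtain ⟨L, hL, hle⟩ := hB.exists_dist_le_add_mul hd hnonneg hpos
    (η := 1 / (2 * (n + 1))) (by positivity)
  refine ⟨1 / L, by positivity, 0, mem_interior.2 ⟨ball 0 (1 / 2), hcover _ fun x hx ↦ ?_,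
    isOpen_ball, by simp⟩⟩
  have hcoord (i : Fin n) : |(F (1 / L) x - x) i| ≤ 1 / (2 * (n + 1)) := by
    have hlower (z : B) :
        x i - 1 / (2 * (n + 1)) ≤ (z : EuclideanSpace ℝ (Fin n)) i + 1 / (1 / L) * ρ.dist x z := by
      have h1 := hle x hx z z.2
      have h2 := (le_abs_self _).trans (PiLp.norm_apply_le (x - (z : EuclideanSpace ℝ (Fin n))) i)
      rw [← dist_eq_norm, PiLp.sub_apply] at h2
      rw [one_div_one_div]
      linarith
    have h1 : x i - 1 / (2 * (n + 1)) ≤ F (1 / L) x i := by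
      rw [hF]
      exact le_ciInf hlower
    have h2 : F (1 / L) x i ≤ x i := by
      rw [hF]
      refine (ciInf_le ⟨_, forall_mem_range.2 hlower⟩ (⟨x, hx⟩ : B)).trans_eq ?_
      simp [hself]
    rw [PiLp.sub_apply, abs_le]
    have : (0 : ℝ) < 1 / (2 * (n + 1)) := by positivity
    constructor <;> linarith
  refine (EuclideanSpace.norm_le_card_mul hcoord).trans ?_
  rw [Fintype.card_fin, mul_one_div, div_le_iff₀ (by positivity)]
  linarith
end

section
/- Let ρ be a metric on ℝⁿ whose induced topology coincides with the Euclidean topology. Then the closed Euclidean unit ball 𝔹 = { x ∈ ℝⁿ : ‖x‖ ≤ 1 } is compact in the metric space (ℝⁿ, ρ), and for every ε > 0 the map F^ε := (π₁^ε, …, πₙ^ε) : (𝔹, ρ) → (ℝⁿ, Euclidean) defined by π_i^ε(x) := min_{z ∈ 𝔹} [ π_i(z) + (1/ε) ρ(x,z) ] is Lipschitz: there exists C_ε > 0 with ‖F^ε(x) − F^ε(y)‖ ≤ C_ε ρ(x,y) for all x, y ∈ 𝔹; moreover F^ε → id uniformly on 𝔹 as ε → 0⁺. -/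
section InfConvolution

variable {X : Type*} [PseudoMetricSpace X] {K : Set X} {f : X → ℝ}

theorem bddBelow_range_add_mul_dist (hf : BddBelow (f '' K)) {ε : ℝ} (hε : 0 < ε) (x : X) :
    BddBelow (Set.range fun z : K => f z + (1 / ε) * dist x z) := by
  obtain ⟨m, hm⟩ := hf
  refine ⟨m, ?_⟩
  rintro _ ⟨z, rfl⟩
  have h₁ : m ≤ f z := hm ⟨z, z.2, rfl⟩
  have h₂ : 0 ≤ (1 / ε) * dist x z := by positivity
  show m ≤ f z + (1 / ε) * dist x z
  linarith

/-- The infimal convolution of a function bounded below with `dist / ε` is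
`1 / ε`-Lipschitz. -/
theorem abs_infConvolution_sub_le (hK : K.Nonempty) (hf : BddBelow (f '' K)) {ε : ℝ}
    (hε : 0 < ε) (x y : X) :
    |(⨅ z : K, (f z + (1 / ε) * dist x z)) - ⨅ z : K, (f z + (1 / ε) * dist y z)| ≤
      (1 / ε) * dist x y := by
  have : Nonempty K := hK.to_subtype
  have key (x y : X) : (⨅ z : K, (f z + (1 / ε) * dist x z)) - (1 / ε) * dist x y ≤
      ⨅ z : K, (f z + (1 / ε) * dist y z) := by
    refine le_ciInf fun z => ?_
    have h₁ : (⨅ z : K, (f z + (1 / ε) * dist x z)) ≤ f z + (1 / ε) * dist x z :=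
      ciInf_le (bddBelow_range_add_mul_dist hf hε x) z
    have h₂ : (1 / ε) * dist x z ≤ (1 / ε) * (dist x y + dist y z) := by
      gcongr
      exact dist_triangle _ _ _
    linarith
  have hxy := key x y
  have hyx := key y x
  rw [dist_comm y x] at hyx
  rw [abs_le]
  constructor <;> linarith

/-- On a compact set, the infimal convolutions of a continuous function with `dist / ε`
converge uniformly to the function as `ε → 0⁺`. -/
theorem IsCompact.exists_abs_infConvolution_sub_le (hK : IsCompact K) (hf : ContinuousOn f K)
    {η : ℝ} (hη : 0 < η) :
    ∃ ε₀ > (0 : ℝ), ∀ ε : ℝ, 0 < ε → ε ≤ ε₀ → ∀ x ∈ K,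
      |(⨅ z : K, (f z + (1 / ε) * dist x z)) - f x| ≤ η := by
  obtain ⟨M, hM⟩ := hK.exists_bound_of_continuousOn hf
  obtain ⟨δ, hδ, hfδ⟩ := Metric.uniformContinuousOn_iff.1
    (hK.uniformContinuousOn_of_continuous hf) η hη
  refine ⟨δ / (2 * |M| + 1), by positivity, fun ε hε hε₀ x hx => ?_⟩
  have : Nonempty K := ⟨⟨x, hx⟩⟩
  have hle : (⨅ z : K, (f z + (1 / ε) * dist x z)) ≤ f x := by
    simpa using ciInf_le (bddBelow_range_add_mul_dist
      (hK.bddBelow_image hf) hε x) ⟨x, hx⟩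
  have hge : f x - η ≤ ⨅ z : K, (f z + (1 / ε) * dist x z) := by
    refine le_ciInf fun z => ?_
    rcases lt_or_ge (dist x z) δ with h | h
    · have h₁ := hfδ x hx z z.2 h
      rw [Real.dist_eq, abs_lt] at h₁
      have h₂ : 0 ≤ (1 / ε) * dist x z := by positivity
      linarith
    · have h₁ := abs_le.1 (hM x hx)
      have h₂ := abs_le.1 (hM z z.2)
      have h₃ : 2 * |M| + 1 ≤ (1 / ε) * dist x z := by
        rw [le_div_iff₀ (by positivity)] at hε₀
        rw [one_div_mul_eq_div, le_div_iff₀ hε]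
        linarith
      linarith [le_abs_self M]
  rw [abs_le]
  constructor <;> linarith

end InfConvolution

theorem EuclideanSpace.norm_le_sqrt_card_mul {ι : Type*} [Fintype ι] {v : EuclideanSpace ℝ ι}
    {c : ℝ} (hc : 0 ≤ c) (hv : ∀ i, |v i| ≤ c) : ‖v‖ ≤ √(Fintype.card ι) * c := by
  rw [EuclideanSpace.norm_eq, ← Real.sqrt_sq hc, ← Real.sqrt_mul (Nat.cast_nonneg _)]
  refine Real.sqrt_le_sqrt ?_
  calc ∑ i, ‖v i‖ ^ 2 ≤ ∑ _i : ι, c ^ 2 :=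
        Finset.sum_le_sum fun i _ => pow_le_pow_left₀ (norm_nonneg _) (hv i) 2
    _ = Fintype.card ι * c ^ 2 := by simp

/-- Let `ρ` be a metric on `ℝⁿ` inducing the Euclidean topology. Then the closed Euclidean
unit ball `𝔹` is compact in `(ℝⁿ, ρ)`; moreover, for every `ε > 0` the map
`F^ε = (π₁^ε, …, πₙ^ε)`, with `π_i^ε(x) = min_{z ∈ 𝔹} (π_i(z) + (1/ε) ρ(x,z))`, is
Lipschitz from `(𝔹, ρ)` to Euclidean `ℝⁿ`, and `F^ε → id` uniformly on `𝔹` as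
`ε → 0⁺`. -/
theorem infConvolution_lipschitz_and_uniform_convergence (n : ℕ)
    (ρ : MetricSpace (EuclideanSpace ℝ (Fin n)))
    (hρ : ρ.toUniformSpace.toTopologicalSpace =
      (inferInstance : TopologicalSpace (EuclideanSpace ℝ (Fin n))))
    (F : ℝ → EuclideanSpace ℝ (Fin n) → EuclideanSpace ℝ (Fin n))
    (hF : ∀ (ε : ℝ) (x : EuclideanSpace ℝ (Fin n)) (i : Fin n),
      F ε x i = ⨅ z : Metric.closedBall (0 : EuclideanSpace ℝ (Fin n)) 1,
        ((z : EuclideanSpace ℝ (Fin n)) i + (1 / ε) * ρ.dist x z)) :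
    @IsCompact (EuclideanSpace ℝ (Fin n)) ρ.toUniformSpace.toTopologicalSpace
      (Metric.closedBall (0 : EuclideanSpace ℝ (Fin n)) 1) ∧
    (∀ ε > (0 : ℝ), ∃ C > (0 : ℝ),
      ∀ x ∈ Metric.closedBall (0 : EuclideanSpace ℝ (Fin n)) 1,
      ∀ y ∈ Metric.closedBall (0 : EuclideanSpace ℝ (Fin n)) 1,
        ‖F ε x - F ε y‖ ≤ C * ρ.dist x y) ∧
    (∀ η > (0 : ℝ), ∃ ε₀ > (0 : ℝ), ∀ ε : ℝ, 0 < ε → ε ≤ ε₀ →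
      ∀ x ∈ Metric.closedBall (0 : EuclideanSpace ℝ (Fin n)) 1, ‖F ε x - x‖ ≤ η) := by
  have hK : @IsCompact (EuclideanSpace ℝ (Fin n)) ρ.toUniformSpace.toTopologicalSpace
      (Metric.closedBall (0 : EuclideanSpace ℝ (Fin n)) 1) := by
    rw [hρ]
    exact isCompact_closedBall _ _
  have hcont (i : Fin n) : @ContinuousOn (EuclideanSpace ℝ (Fin n)) ℝ
      ρ.toUniformSpace.toTopologicalSpace _ (fun z => z i)
      (Metric.closedBall (0 : EuclideanSpace ℝ (Fin n)) 1) := by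
    rw [hρ]
    exact (EuclideanSpace.proj (𝕜 := ℝ) i).continuous.continuousOn
  refine ⟨hK, fun ε hε => ⟨(√n + 1) * (1 / ε), by positivity, fun x _ y _ => ?_⟩,
    fun η hη => ?_⟩
  · have hd : 0 ≤ (1 / ε) * ρ.dist x y :=
      mul_nonneg (by positivity) (@dist_nonneg _ ρ.toPseudoMetricSpace x y)
    have h := EuclideanSpace.norm_le_sqrt_card_mul (v := F ε x - F ε y) hd fun i => by
      rw [PiLp.sub_apply, hF, hF]
      exact @abs_infConvolution_sub_le _ ρ.toPseudoMetricSpace _ (fun z => z i)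
        ⟨0, by simp⟩ (@IsCompact.bddBelow_image _ _ _ _
          ρ.toUniformSpace.toTopologicalSpace _ _ _ _ hK (hcont i)) ε hε x y
    rw [Fintype.card_fin] at h
    linarith
  · have hη' : 0 < η / (√n + 1) := by positivity
    choose e he₀ he using fun i : Fin n =>
      @IsCompact.exists_abs_infConvolution_sub_le _ ρ.toPseudoMetricSpace _ _ hK (hcont i) _ hη'
    obtain ⟨ε₀, hε₀, hle⟩ : ∃ ε₀ > (0 : ℝ), ∀ i, ε₀ ≤ e i := by
      rcases isEmpty_or_nonempty (Fin n) with h | h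
      · exact ⟨1, one_pos, fun i => h.elim i⟩
      · obtain ⟨j, hj⟩ := Finite.exists_min e
        exact ⟨e j, he₀ j, hj⟩
    refine ⟨ε₀, hε₀, fun ε hε hεle x hx => ?_⟩
    have h := EuclideanSpace.norm_le_sqrt_card_mul (v := F ε x - x) hη'.le fun i => by
      rw [PiLp.sub_apply, hF]
      exact he i ε hε (hεle.trans (hle i)) x hx
    rw [Fintype.card_fin] at h
    refine h.trans ?_
    rw [mul_div_assoc', div_le_iff₀ (by positivity)]
    linarith
end
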